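/- There exist universal constants c, c' > 0 such that for all integers k ≥ 2 and n ≥ 1: if n ≥ k/log k then R*(k,n) ≥ c·(k/(n·log k))², and if n ≤ k/log k then R*(k,n) ≥ c'. -/

import Mathlib

open scoped BigOperators
open Real

noncomputable section

/-- The set of probability vectors on `Fin k`. -/
def probVec (k : ℕ) : Set (Fin k → ℝ) := {P | (∀ i, 0 ≤ P i) ∧ (∑ i, P i) = 1}

/-- Shannon entropy `H(P) = ∑ pᵢ log (1/pᵢ)` (natural log, `0·log(1/0) = 0`). -/
def entropy {k : ℕ} (P : Fin k → ℝ) : ℝ := ∑ i, P i * Real.log (1 / P i)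

/-- The multinomial probability mass function of the histogram `N` of `n` i.i.d. samples
from `P`. -/
def multinomialPMF {k : ℕ} (n : ℕ) (P : Fin k → ℝ) (N : Fin k → ℕ) : ℝ :=
  if (∑ i, N i) = n then
    (n.factorial : ℝ) / (∏ i, ((N i).factorial : ℝ)) * ∏ i, P i ^ (N i)
  else 0

/-- Mean squared error of the estimator `est` of the entropy, from the histogram of
`n` i.i.d. samples of `P`. -/
def mseIID {k : ℕ} (n : ℕ) (P : Fin k → ℝ) (est : (Fin k → ℕ) → ℝ) : ℝ :=
  ∑' N : Fin k → ℕ, multinomialPMF n P N * (est N - entropy P) ^ 2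

/-- The minimax quadratic risk `R*(k,n)` of entropy estimation. -/
def Rstar (k n : ℕ) : ℝ :=
  ⨅ est : (Fin k → ℕ) → ℝ, ⨆ P : probVec k, mseIID n P.1 est

/-! The bound is proved by the method of two fuzzy hypotheses of Wu and Yang. For every `R` there
are two laws on `[0, ε + R ^ 2]`, of common mean `ε`, whose moments of order at most `R + 1` agree
but whose means of `-τ log τ` differ by a constant. They arise by tilting, by the inverse of their
atoms, two laws carried by the even and by the odd `4R`-th roots of unity, moved to the interval
by `z ↦ ε + R ^ 2 (1 - Re z) / 2` and weighted by the Fejér kernel of order `R`. The alternating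
sum over the roots annihilates polynomials of degree at most `R` in the atoms, because their
product with the kernel is a trigonometric polynomial of degree less than `2R`; the means of `log`
differ because the kernel concentrates at `z = 1`, which is sent to `ε`, where `-log` is large.

With `R` of order `log k`, independent masses following these laws, scaled down to order
`min (1 / k) (1 / (n log k))`, produce Poisson counts of rate at most a small multiple of `R`, so
that the two laws of each count agree up to order `k ^ (-6)` at every value, while the entropies
are concentrated around means which differ by the order of the total random mass. One
deterministic entry carries the remaining mass. Conditioning a product of Poisson distributions on
its sum `n` gives the multinomial distribution of the normalized masses, reweighted according to
the random total mass; since the Poisson distribution of mean `n` takes the value `n` with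
probability of order at least `1 / n`, conditioning inflates the distance between the mixtures by
a factor `n` only. The remaining cases, `k` bounded or `n > k ^ 2`, follow from the parametric
bound of order `1 / n`. -/

section Fejer

open Finset Polynomial

lemma sum_stdAddChar_pow {N i : ℕ} [NeZero N] (hi : i < N) :
    ∑ j : ZMod N, ZMod.stdAddChar j ^ i = if i = 0 then (N : ℂ) else 0 := by
  have hi0 : (i : ZMod N) = 0 ↔ i = 0 := by
    rw [ZMod.natCast_eq_zero_iff]
    exact ⟨fun h ↦ Nat.eq_zero_of_dvd_of_lt h hi, fun h ↦ h ▸ dvd_zero N⟩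
  have h := AddChar.sum_mulShift (i : ZMod N) (ZMod.isPrimitive_stdAddChar N)
  simp only [hi0, ZMod.card, Nat.cast_ite, Nat.cast_zero] at h
  rw [← h]
  exact sum_congr rfl fun j _ ↦ by
    rw [← AddChar.map_nsmul_eq_pow, nsmul_eq_mul, mul_comm]

lemma sum_eval_stdAddChar {N : ℕ} [NeZero N] {p : ℂ[X]} (hp : p.natDegree < N) :
    ∑ j : ZMod N, p.eval (ZMod.stdAddChar j) = N * p.coeff 0 := by
  simp_rw [eval_eq_sum_range]
  rw [sum_comm]
  calc _ = ∑ i ∈ range (p.natDegree + 1), p.coeff i * if i = 0 then (N : ℂ) else 0 :=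
        sum_congr rfl fun i hi ↦ by
          rw [← mul_sum, sum_stdAddChar_pow ((mem_range_succ_iff.1 hi).trans_lt hp)]
    _ = N * p.coeff 0 := by simp [mul_comm]

lemma stdAddChar_pow_two_mul {R : ℕ} [NeZero R] (j : ZMod (4 * R)) :
    ZMod.stdAddChar j ^ (2 * R) = (-1 : ℂ) ^ j.val := by
  have hR : (R : ℂ) ≠ 0 := NeZero.ne _
  rw [ZMod.stdAddChar_apply, ZMod.toCircle_apply, ← Complex.exp_pi_mul_I, ← Complex.exp_nat_mul,
    ← Complex.exp_nat_mul]
  congr 1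
  push_cast
  field_simp
  ring

lemma four_mul_abs_valMinAbs_div_le {N : ℕ} [NeZero N] (j : ZMod N) :
    4 * |(j.valMinAbs : ℝ)| / N ≤ ‖ZMod.stdAddChar j - 1‖ := by
  set d : ℤ := j.valMinAbs
  have hN : (0 : ℝ) < N := Nat.cast_pos.2 (NeZero.pos N)
  have hd : |(d : ℝ)| ≤ N / 2 := by
    rw [← Int.cast_abs, Int.abs_eq_natAbs, Int.cast_natCast]
    exact (Nat.cast_le.2 j.natAbs_valMinAbs_le).trans Nat.cast_div_le
  have hangle : ZMod.stdAddChar j = Complex.exp (Complex.I * ((2 * π * d / N : ℝ) : ℂ)) := by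
    conv_lhs => rw [← j.coe_valMinAbs]
    rw [ZMod.stdAddChar_coe]
    push_cast
    congr 1
    ring
  have harg : 2 * π * d / N / 2 = π * d / N := by ring
  have habs : |π * d / N| ≤ π / 2 := by
    rw [abs_div, abs_mul, abs_of_pos pi_pos, abs_of_pos hN, div_le_iff₀ hN]
    nlinarith [pi_pos]
  have hsin := mul_abs_le_abs_sin habs
  rw [hangle, Complex.norm_exp_I_mul_ofReal_sub_one, harg, norm_mul, norm_eq_abs, norm_eq_abs]
  rw [abs_div, abs_mul, abs_of_pos pi_pos, abs_of_pos hN] at hsin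
  calc 4 * |(d : ℝ)| / N = |2| * (2 / π * (π * |(d : ℝ)| / N)) := by
        rw [abs_two]
        field_simp
        ring
    _ ≤ _ := by gcongr

/-- The Fejér kernel of order `R` at a point `z` of the unit circle, normalised to be `1` at
`z = 1`. -/
def fejerWeight (R : ℕ) (z : ℂ) : ℝ := ‖∑ r ∈ range R, z ^ r‖ ^ 2 / R ^ 2

/-- The image of a point `z` of the unit circle under `z ↦ (1 - Re z) / 2`, stretched to the
interval `[0, R²]`. -/
def fejerNode (R : ℕ) (z : ℂ) : ℝ := R ^ 2 * ‖z - 1‖ ^ 2 / 4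

lemma fejerWeight_nonneg (R : ℕ) (z : ℂ) : 0 ≤ fejerWeight R z := by
  unfold fejerWeight; positivity

lemma fejerNode_nonneg (R : ℕ) (z : ℂ) : 0 ≤ fejerNode R z := by
  unfold fejerNode; positivity

lemma fejerWeight_one (R : ℕ) [NeZero R] : fejerWeight R 1 = 1 := by
  simp [fejerWeight, NeZero.ne]

lemma fejerNode_one (R : ℕ) : fejerNode R 1 = 0 := by
  simp [fejerNode]

lemma fejerNode_le {z : ℂ} (hz : ‖z‖ = 1) (R : ℕ) : fejerNode R z ≤ R ^ 2 := by
  have h : ‖z - 1‖ ≤ 2 := (norm_sub_le z 1).trans_eq (by norm_num [hz])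
  have h2 : ‖z - 1‖ ^ 2 ≤ 2 ^ 2 := by gcongr
  unfold fejerNode
  nlinarith [sq_nonneg (R : ℝ)]

lemma fejerWeight_mul_fejerNode_le_one {z : ℂ} (hz : ‖z‖ = 1) (R : ℕ) :
    fejerWeight R z * fejerNode R z ≤ 1 := by
  rcases eq_or_ne R 0 with rfl | hR
  · simp [fejerNode]
  have h : ‖∑ r ∈ range R, z ^ r‖ * ‖z - 1‖ ≤ 2 := by
    rw [← norm_mul, geom_sum_mul]
    exact (norm_sub_le _ 1).trans_eq (by norm_num [hz])
  calc fejerWeight R z * fejerNode R z = (‖∑ r ∈ range R, z ^ r‖ * ‖z - 1‖) ^ 2 / 4 := by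
        unfold fejerWeight fejerNode
        field_simp
    _ ≤ 2 ^ 2 / 4 := by gcongr
    _ = 1 := by norm_num

lemma sq_valMinAbs_div_four_le_fejerNode {R : ℕ} [NeZero R] (j : ZMod (4 * R)) :
    (j.valMinAbs : ℝ) ^ 2 / 4 ≤ fejerNode R (ZMod.stdAddChar j) := by
  have hR : (R : ℝ) ≠ 0 := NeZero.ne _
  calc (j.valMinAbs : ℝ) ^ 2 / 4
      = R ^ 2 * (4 * |(j.valMinAbs : ℝ)| / (4 * R : ℕ)) ^ 2 / 4 := by
        rw [div_pow, mul_pow, sq_abs]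
        push_cast
        field_simp
    _ ≤ R ^ 2 * ‖ZMod.stdAddChar j - 1‖ ^ 2 / 4 := by
        gcongr
        exact four_mul_abs_valMinAbs_div_le j

section Annihilation

variable {z : ℂ}

lemma norm_geom_sum_sq_mul_pow (hz : ‖z‖ = 1) (R : ℕ) :
    (‖∑ r ∈ range R, z ^ r‖ : ℂ) ^ 2 * z ^ (R - 1) = (∑ r ∈ range R, z ^ r) ^ 2 := by
  have hz1 : z * starRingEnd ℂ z = 1 := by simp [Complex.mul_conj', hz]
  have hrev : (∑ r ∈ range R, starRingEnd ℂ z ^ r) * z ^ (R - 1) = ∑ r ∈ range R, z ^ r := by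
    rw [← sum_range_reflect, sum_mul]
    refine sum_congr rfl fun r hr ↦ ?_
    have hr' : R - 1 = (R - 1 - r) + r := by have := mem_range.1 hr; lia
    nth_rw 2 [hr']
    rw [pow_add, ← mul_assoc, ← mul_pow, mul_comm _ z, hz1, one_pow, one_mul]
  rw [← Complex.mul_conj', map_sum, mul_assoc]
  simp only [map_pow]
  rw [hrev, sq]

lemma norm_sub_one_sq_mul (hz : ‖z‖ = 1) : (‖z - 1‖ : ℂ) ^ 2 * z = -(z - 1) ^ 2 := by
  have hz1 : z * starRingEnd ℂ z = 1 := by simp [Complex.mul_conj', hz]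
  rw [← Complex.mul_conj', map_sub, map_one]
  linear_combination (z - 1) * hz1

lemma pow_mul_fejerWeight_mul_fejerNode_pow {R t : ℕ} [NeZero R] (hz : ‖z‖ = 1) (ht : t ≤ R) :
    z ^ (2 * R) * (fejerWeight R z * fejerNode R z ^ t : ℝ) =
      (-(R ^ 2 / 4)) ^ t / R ^ 2 *
        (z ^ (R + 1 - t) * (∑ r ∈ range R, z ^ r) ^ 2 * (z - 1) ^ (2 * t)) := by
  have hexp : z ^ (2 * R) = z ^ (R + 1 - t) * z ^ (R - 1) * z ^ t := by
    have := NeZero.pos R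
    rw [← pow_add, ← pow_add]; congr 1; lia
  unfold fejerWeight fejerNode
  push_cast
  rw [hexp, ← norm_geom_sum_sq_mul_pow hz, pow_mul (z - 1), ← neg_neg ((z - 1) ^ 2),
    ← norm_sub_one_sq_mul hz]
  have hpow : (-((R : ℂ) ^ 2 / 4)) ^ t * (-((‖z - 1‖ : ℂ) ^ 2 * z)) ^ t =
      (R ^ 2 * ‖z - 1‖ ^ 2 / 4) ^ t * z ^ t := by
    rw [← mul_pow, ← mul_pow]; congr 1; ring
  linear_combination -(z ^ (R + 1 - t) * (‖∑ r ∈ range R, z ^ r‖ ^ 2 * z ^ (R - 1)) / R ^ 2) * hpow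

end Annihilation

section FourthRoots

variable {R : ℕ} [NeZero R]

lemma sum_sign_mul_fejerWeight_mul_fejerNode_pow {t : ℕ} (ht : t ≤ R) :
    ∑ j : ZMod (4 * R), (-1 : ℝ) ^ j.val *
      (fejerWeight R (ZMod.stdAddChar j) * fejerNode R (ZMod.stdAddChar j) ^ t) = 0 := by
  have hR := NeZero.pos R
  set p : ℂ[X] := X ^ (R + 1 - t) * (∑ r ∈ range R, X ^ r) ^ 2 * (X - C 1) ^ (2 * t) with hp
  have hdeg : p.natDegree < 4 * R := by
    have hgeom : (∑ r ∈ range R, (X : ℂ[X]) ^ r).natDegree ≤ R - 1 :=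
      natDegree_sum_le_of_forall_le _ _ fun i hi ↦
        (natDegree_X_pow_le i).trans (Nat.le_sub_one_of_lt (mem_range.1 hi))
    have := natDegree_mul_le_of_le (natDegree_mul_le_of_le
      (natDegree_X_pow_le (R := ℂ) (R + 1 - t)) (natDegree_pow_le_of_le 2 hgeom))
      (natDegree_pow_le_of_le (2 * t) (natDegree_X_sub_C_le (1 : ℂ)))
    lia
  have hcoeff : p.coeff 0 = 0 := by
    have : R + 1 - t ≠ 0 := by lia
    simp [hp, coeff_zero_eq_eval_zero, this]
  have hterm (j : ZMod (4 * R)) : ((-1 : ℂ) ^ j.val *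
      (fejerWeight R (ZMod.stdAddChar j) * fejerNode R (ZMod.stdAddChar j) ^ t : ℝ)) =
      (-(R ^ 2 / 4)) ^ t / R ^ 2 * p.eval (ZMod.stdAddChar j) := by
    rw [← stdAddChar_pow_two_mul, pow_mul_fejerWeight_mul_fejerNode_pow (AddChar.norm_apply _ _) ht]
    simp [hp, eval_finsetSum]
  apply Complex.ofReal_injective
  push_cast at hterm ⊢
  rw [sum_congr rfl fun j _ ↦ hterm j, ← mul_sum, sum_eval_stdAddChar hdeg, hcoeff]
  simp

lemma one_add_abs_log_add_le {ε y : ℝ} (hε0 : 0 < ε) (hε1 : ε ≤ 1) (hy : 1 / 4 ≤ y) :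
    1 + |log (ε + y)| ≤ 24 * y ^ (1 / 4 : ℝ) := by
  have hy0 : 0 < y := by linarith
  have hroot : 1 / 4 ≤ y ^ (1 / 4 : ℝ) :=
    calc (1 / 4 : ℝ) = (1 / 4) ^ (1 : ℝ) := (rpow_one _).symm
      _ ≤ (1 / 4) ^ (1 / 4 : ℝ) :=
        rpow_le_rpow_of_exponent_ge (by norm_num) (by norm_num) (by norm_num)
      _ ≤ y ^ (1 / 4 : ℝ) := by gcongr
  have hlower : -3 ≤ log (ε + y) := by
    have hinv : (ε + y)⁻¹ ≤ 4 := (inv_le_comm₀ (by linarith) (by norm_num)).2 (by linarith)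
    linarith [one_sub_inv_le_log_of_pos (show 0 < ε + y by linarith)]
  have hupper : log (ε + y) ≤ 20 * y ^ (1 / 4 : ℝ) :=
    calc log (ε + y) ≤ log (5 * y) := log_le_log (by linarith) (by linarith)
      _ ≤ (5 * y) ^ (1 / 4 : ℝ) / (1 / 4) := log_le_rpow_div (by positivity) (by norm_num)
      _ = 4 * (5 ^ (1 / 4 : ℝ) * y ^ (1 / 4 : ℝ)) := by
        rw [mul_rpow (by norm_num) hy0.le]; ring
      _ ≤ 4 * (5 ^ (1 : ℝ) * y ^ (1 / 4 : ℝ)) := by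
        gcongr <;> norm_num
      _ = 20 * y ^ (1 / 4 : ℝ) := by rw [rpow_one]; ring
  have : |log (ε + y)| ≤ 20 * y ^ (1 / 4 : ℝ) := abs_le.2 ⟨by linarith, hupper⟩
  linarith

lemma fejerWeight_mul_one_add_abs_log_le {ε : ℝ} (hε0 : 0 < ε) (hε1 : ε ≤ 1)
    {j : ZMod (4 * R)} (hj : j ≠ 0) :
    fejerWeight R (ZMod.stdAddChar j) * (1 + |log (ε + fejerNode R (ZMod.stdAddChar j))|) ≤
      96 * |(j.valMinAbs : ℝ)| ^ (-(3 / 2) : ℝ) := by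
  set y := fejerNode R (ZMod.stdAddChar j)
  set d : ℝ := |(j.valMinAbs : ℝ)|
  have hd : 1 ≤ d := by
    have : j.valMinAbs ≠ 0 := by simpa using hj
    simpa [d] using Int.cast_le (R := ℝ).2 (Int.one_le_abs this)
  have hdy : d ^ 2 / 4 ≤ y := by
    simpa only [d, sq_abs] using sq_valMinAbs_div_four_le_fejerNode j
  have hy0 : 0 < y := by nlinarith
  have hweight : fejerWeight R (ZMod.stdAddChar j) ≤ y⁻¹ := by
    rw [← one_div, le_div_iff₀ hy0]
    exact fejerWeight_mul_fejerNode_le_one (AddChar.norm_apply _ _) R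
  have hd4 : (d ^ 2 / 4) ^ (-(3 / 4) : ℝ) ≤ 4 * d ^ (-(3 / 2) : ℝ) := by
    rw [div_eq_mul_inv, mul_comm, mul_rpow (by norm_num) (by positivity), inv_rpow (by norm_num),
      rpow_neg (by norm_num), inv_inv, ← rpow_natCast, ← rpow_mul (by positivity)]
    have h4 : (4 : ℝ) ^ (3 / 4 : ℝ) ≤ 4 ^ (1 : ℝ) :=
      rpow_le_rpow_of_exponent_le (by norm_num) (by norm_num)
    rw [rpow_one] at h4
    norm_num at h4 ⊢
    gcongr
  calc _ ≤ y⁻¹ * (24 * y ^ (1 / 4 : ℝ)) := by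
        gcongr
        exact one_add_abs_log_add_le hε0 hε1 (by nlinarith)
    _ = 24 * y ^ (-(3 / 4) : ℝ) := by
        rw [← rpow_neg_one, mul_left_comm, ← rpow_add hy0]; norm_num
    _ ≤ 24 * (d ^ 2 / 4) ^ (-(3 / 4) : ℝ) := by
        gcongr ?_ * ?_
        exact rpow_le_rpow_of_nonpos (by positivity) hdy (by norm_num)
    _ ≤ 96 * d ^ (-(3 / 2) : ℝ) := by linarith

lemma sum_fejerWeight_mul_one_add_abs_log_le {ε : ℝ} (hε0 : 0 < ε) (hε1 : ε ≤ 1) :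
    ∑ j ∈ univ.erase (0 : ZMod (4 * R)), fejerWeight R (ZMod.stdAddChar j) *
      (1 + |log (ε + fejerNode R (ZMod.stdAddChar j))|) ≤
        96 * ∑' d : ℤ, |(d : ℝ)| ^ (-(3 / 2) : ℝ) :=
  calc _ ≤ ∑ j ∈ univ.erase (0 : ZMod (4 * R)), 96 * |(j.valMinAbs : ℝ)| ^ (-(3 / 2) : ℝ) :=
        sum_le_sum fun j hj ↦
          fejerWeight_mul_one_add_abs_log_le hε0 hε1 (ne_of_mem_erase hj)
    _ = 96 * ∑ d ∈ (univ.erase (0 : ZMod (4 * R))).map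
          ⟨ZMod.valMinAbs, ZMod.injective_valMinAbs⟩, |(d : ℝ)| ^ (-(3 / 2) : ℝ) := by
        rw [sum_map, mul_sum]; rfl
    _ ≤ _ := by
        gcongr
        exact (summable_abs_int_rpow (by norm_num)).sum_le_tsum _ fun d _ ↦ by positivity

lemma exists_fejer_log_gap :
    ∃ ε B : ℝ, 0 < ε ∧ ε ≤ 1 ∧ 1 ≤ B ∧ ∀ (R : ℕ) [NeZero R],
      ∑ j : ZMod (4 * R), fejerWeight R (ZMod.stdAddChar j) ≤ B ∧
      ∑ j : ZMod (4 * R), (-1 : ℝ) ^ j.val * (fejerWeight R (ZMod.stdAddChar j) *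
        log (ε + fejerNode R (ZMod.stdAddChar j))) ≤ -1 := by
  set S := 96 * ∑' d : ℤ, |(d : ℝ)| ^ (-(3 / 2) : ℝ)
  have hS : 0 ≤ S := mul_nonneg (by norm_num) (tsum_nonneg fun d ↦ by positivity)
  have hε1 : exp (-(S + 1)) ≤ 1 := exp_le_one_iff.2 (by linarith)
  refine ⟨exp (-(S + 1)), S + 1, exp_pos _, hε1, by linarith, fun R _ ↦ ?_⟩
  have hsum := sum_fejerWeight_mul_one_add_abs_log_le (R := R) (exp_pos (-(S + 1))) hε1
  have hK (j : ZMod (4 * R)) := fejerWeight_nonneg R (ZMod.stdAddChar j)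
  have h0 : (0 : ZMod (4 * R)) ∈ univ := mem_univ _
  constructor
  · rw [← add_sum_erase _ _ h0, AddChar.map_zero_eq_one, fejerWeight_one, add_comm]
    refine add_le_add_left ((sum_le_sum fun j _ ↦ ?_).trans hsum) _
    exact le_mul_of_one_le_right (hK j) (le_add_of_nonneg_right (abs_nonneg _))
  · rw [← add_sum_erase _ _ h0, AddChar.map_zero_eq_one, fejerWeight_one, fejerNode_one,
      add_zero, log_exp, ZMod.val_zero, pow_zero, one_mul, one_mul]
    refine le_of_le_of_eq (b := -(S + 1) + S) ?_ (by ring)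
    refine add_le_add_right ((sum_le_sum fun j _ ↦ (le_abs_self _).trans ?_).trans hsum) _
    rw [abs_mul, abs_pow, abs_neg, abs_one, one_pow, one_mul, abs_mul, abs_of_nonneg (hK j)]
    exact mul_le_mul_of_nonneg_left (by linarith) (hK j)

end FourthRoots

end Fejer

section FiniteProbability

variable {T ι : Type*} [Fintype T] [Fintype ι] [DecidableEq ι]

/-- The mean of `f` under the weights `p` on a finite type. -/
def wmean (p f : T → ℝ) : ℝ := ∑ t, p t * f t

/-- The variance of `f` under the weights `p` on a finite type. -/
def wvar (p f : T → ℝ) : ℝ := wmean p fun t ↦ (f t - wmean p f) ^ 2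

/-- The product weights on `ι → T`, under which the coordinates are independent of law `p`. -/
def piWeight (p : T → ℝ) (θ : ι → T) : ℝ := ∏ i, p (θ i)

variable {p q f g : T → ℝ}

lemma wmean_mono (hp : p ∈ stdSimplex ℝ T) (h : f ≤ g) : wmean p f ≤ wmean p g :=
  Finset.sum_le_sum fun t _ ↦ mul_le_mul_of_nonneg_left (h t) (hp.1 t)

lemma wmean_nonneg (hp : p ∈ stdSimplex ℝ T) (h : 0 ≤ f) : 0 ≤ wmean p f :=
  Finset.sum_nonneg fun t _ ↦ mul_nonneg (hp.1 t) (h t)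

lemma wmean_const (hp : p ∈ stdSimplex ℝ T) (c : ℝ) : wmean p (fun _ ↦ c) = c := by
  rw [wmean, ← Finset.sum_mul, hp.2, one_mul]

lemma wmean_add (p f g : T → ℝ) : wmean p (fun t ↦ f t + g t) = wmean p f + wmean p g := by
  simp only [wmean, mul_add, Finset.sum_add_distrib]

lemma wmean_sub (p f g : T → ℝ) : wmean p (fun t ↦ f t - g t) = wmean p f - wmean p g := by
  simp only [wmean, mul_sub, Finset.sum_sub_distrib]

lemma wmean_const_mul (p f : T → ℝ) (c : ℝ) : wmean p (fun t ↦ c * f t) = c * wmean p f := by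
  simp only [wmean, Finset.mul_sum, mul_left_comm]

lemma wmean_sum {κ : Type*} (s : Finset κ) (p : T → ℝ) (f : κ → T → ℝ) :
    wmean p (fun t ↦ ∑ i ∈ s, f i t) = ∑ i ∈ s, wmean p (f i) := by
  simp only [wmean, Finset.mul_sum]
  exact Finset.sum_comm

lemma wmean_sub_const (hp : p ∈ stdSimplex ℝ T) (f : T → ℝ) (c : ℝ) :
    wmean p (fun t ↦ f t - c) = wmean p f - c := by
  rw [wmean_sub, wmean_const hp]

lemma wvar_le_wmean_sq (hp : p ∈ stdSimplex ℝ T) (f : T → ℝ) :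
    wvar p f ≤ wmean p fun t ↦ f t ^ 2 := by
  have h (t : T) : (f t - wmean p f) ^ 2 =
      f t ^ 2 - 2 * wmean p f * f t + wmean p f ^ 2 := by ring
  simp only [wvar, h]
  rw [wmean_add, wmean_sub, wmean_const_mul, wmean_const hp]
  nlinarith [sq_nonneg (wmean p f)]

lemma wvar_const (hp : p ∈ stdSimplex ℝ T) (c : ℝ) : wvar p (fun _ ↦ c) = 0 := by
  rw [wvar, wmean_const hp c, sub_self, wmean_const hp, zero_pow two_ne_zero]

lemma sum_prod_eq_prod_sum (F : ι → T → ℝ) : ∑ θ : ι → T, ∏ i, F i (θ i) = ∏ i, ∑ t, F i t := by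
  rw [Finset.prod_univ_sum, Fintype.piFinset_univ]

lemma wmean_piWeight_prod (p : T → ℝ) (F : ι → T → ℝ) :
    wmean (piWeight p) (fun θ : ι → T ↦ ∏ i, F i (θ i)) = ∏ i, wmean p (F i) := by
  simp only [wmean, piWeight, ← Finset.prod_mul_distrib]
  exact sum_prod_eq_prod_sum fun i t ↦ p t * F i t

lemma piWeight_mem_stdSimplex (hp : p ∈ stdSimplex ℝ T) :
    (piWeight p : (ι → T) → ℝ) ∈ stdSimplex ℝ (ι → T) :=
  ⟨fun θ ↦ Finset.prod_nonneg fun i _ ↦ hp.1 (θ i), by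
    simp only [piWeight]
    rw [sum_prod_eq_prod_sum fun _ ↦ p]
    simp [hp.2]⟩

lemma wmean_piWeight_eval (hp : p ∈ stdSimplex ℝ T) (f : T → ℝ) (i : ι) :
    wmean (piWeight p) (fun θ ↦ f (θ i)) = wmean p f := by
  have h := wmean_piWeight_prod p fun j t ↦ if j = i then f t else 1
  simp only [Finset.prod_ite_eq', Finset.mem_univ, if_true] at h
  rw [h, Finset.prod_eq_single i (fun j _ hj ↦ by simp [hj, wmean_const hp]) (by simp)]
  simp

lemma wmean_piWeight_mul (hp : p ∈ stdSimplex ℝ T) (f g : T → ℝ) {i j : ι} (hij : i ≠ j) :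
    wmean (piWeight p) (fun θ ↦ f (θ i) * g (θ j)) = wmean p f * wmean p g := by
  have h := wmean_piWeight_prod p fun l t ↦ if l = i then f t else if l = j then g t else 1
  rw [Fintype.prod_eq_mul i j hij fun l hl ↦ by simp [hl.1, hl.2, wmean_const hp]] at h
  simp only [if_true, hij.symm, if_false] at h
  rw [← h]
  congr 1 with θ
  rw [Fintype.prod_eq_mul i j hij fun l hl ↦ by simp [hl.1, hl.2]]
  simp [hij.symm]

lemma wmean_piWeight_sum (hp : p ∈ stdSimplex ℝ T) (F : ι → T → ℝ) :
    wmean (piWeight p) (fun θ : ι → T ↦ ∑ i, F i (θ i)) = ∑ i, wmean p (F i) := by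
  rw [wmean_sum]
  exact Finset.sum_congr rfl fun i _ ↦ wmean_piWeight_eval hp (F i) i

lemma wvar_piWeight_sum (hp : p ∈ stdSimplex ℝ T) (F : ι → T → ℝ) :
    wvar (piWeight p) (fun θ : ι → T ↦ ∑ i, F i (θ i)) = ∑ i, wvar p (F i) := by
  set G : ι → T → ℝ := fun i t ↦ F i t - wmean p (F i)
  have hG (i : ι) : wmean p (G i) = 0 := by
    rw [wmean_sub_const hp, sub_self]
  have hcov (i j : ι) : wmean (piWeight p) (fun θ : ι → T ↦ G i (θ i) * G j (θ j)) =
      if i = j then wvar p (F i) else 0 := by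
    split_ifs with hij
    · subst hij
      exact (wmean_piWeight_eval hp (fun t ↦ G i t * G i t) i).trans (by simp [wvar, G, sq])
    · rw [wmean_piWeight_mul hp _ _ hij, hG, zero_mul]
  unfold wvar
  rw [wmean_piWeight_sum hp]
  simp only [← Finset.sum_sub_distrib, sq, Finset.sum_mul_sum, wmean_sum]
  exact Finset.sum_congr rfl fun i _ ↦
    (Finset.sum_congr rfl fun j _ ↦ hcov i j).trans (by simp [wvar, sq])

lemma sum_fin_succ_pi {k : ℕ} (F : (Fin (k + 1) → T) → ℝ) :
    ∑ N, F N = ∑ a, ∑ N : Fin k → T, F (Fin.cons a N) := by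
  rw [← (Fin.consEquiv fun _ ↦ T).sum_comp, Fintype.sum_prod_type]
  rfl

lemma sum_abs_prod_sub_prod_le {k : ℕ} {F G : Fin k → T → ℝ} (hF : ∀ i, 0 ≤ F i)
    (hG : ∀ i, 0 ≤ G i) (hF1 : ∀ i, ∑ t, F i t ≤ 1) (hG1 : ∀ i, ∑ t, G i t ≤ 1) :
    ∑ N : Fin k → T, |∏ i, F i (N i) - ∏ i, G i (N i)| ≤ ∑ i, ∑ t, |F i t - G i t| := by
  induction k with
  | zero => simp
  | succ k ih =>
    have ih := ih (fun i ↦ hF i.succ) (fun i ↦ hG i.succ) (fun i ↦ hF1 i.succ) fun i ↦ hG1 i.succ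
    have hprod : ∑ N : Fin k → T, ∏ i, G i.succ (N i) ≤ 1 := by
      rw [sum_prod_eq_prod_sum fun i : Fin k ↦ G i.succ]
      exact Finset.prod_le_one (fun i _ ↦ Finset.sum_nonneg fun t _ ↦ hG _ t) fun i _ ↦ hG1 _
    have hstep (a : T) (N : Fin k → T) :
        |F 0 a * ∏ i, F i.succ (N i) - G 0 a * ∏ i, G i.succ (N i)| ≤
          F 0 a * |∏ i, F i.succ (N i) - ∏ i, G i.succ (N i)| +
            |F 0 a - G 0 a| * ∏ i, G i.succ (N i) := by
      set x := ∏ i, F i.succ (N i)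
      set y := ∏ i, G i.succ (N i)
      have hy : 0 ≤ y := Finset.prod_nonneg fun i _ ↦ hG _ _
      calc |F 0 a * x - G 0 a * y| = |F 0 a * (x - y) + (F 0 a - G 0 a) * y| := by ring_nf
        _ ≤ |F 0 a * (x - y)| + |(F 0 a - G 0 a) * y| := abs_add_le _ _
        _ = _ := by rw [abs_mul, abs_mul, abs_of_nonneg (hF 0 a), abs_of_nonneg hy]
    rw [sum_fin_succ_pi, Fin.sum_univ_succ]
    simp only [Fin.prod_univ_succ, Fin.cons_zero, Fin.cons_succ]
    calc _ ≤ _ := Finset.sum_le_sum fun a _ ↦ Finset.sum_le_sum fun N _ ↦ hstep a N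
      _ = (∑ a, F 0 a) * ∑ N : Fin k → T, |∏ i, F i.succ (N i) - ∏ i, G i.succ (N i)| +
          (∑ a, |F 0 a - G 0 a|) * ∑ N : Fin k → T, ∏ i, G i.succ (N i) := by
        simp only [Finset.sum_add_distrib, ← Finset.mul_sum, ← Finset.sum_mul]
      _ ≤ 1 * (∑ i : Fin k, ∑ t, |F i.succ t - G i.succ t|) + (∑ a, |F 0 a - G 0 a|) * 1 := by
        gcongr
        exact hF1 0
      _ = _ := by ring

end FiniteProbability

section MatchedPriors

open Finset

section Tilt

variable {J : Type*} [Fintype J] {ε : ℝ} {κ x : J → ℝ}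

/-- The law of a `none`-or-`J`-valued variable: `κ` reweighted by `ε / x`, the missing mass being
put on `none`. -/
def tiltWeight (ε : ℝ) (κ x : J → ℝ) : Option J → ℝ
  | none => 1 - ∑ j, ε * κ j / x j
  | some j => ε * κ j / x j

/-- The atoms carrying `tiltWeight`: the points `x j`, together with `0` at `none`. -/
def tiltAtom (x : J → ℝ) : Option J → ℝ
  | none => 0
  | some j => x j

lemma tiltWeight_mem_stdSimplex (hκ : κ ∈ stdSimplex ℝ J) (hε : 0 < ε) (hx : ∀ j, ε ≤ x j) :
    tiltWeight ε κ x ∈ stdSimplex ℝ (Option J) := by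
  have hle : ∑ j, ε * κ j / x j ≤ 1 :=
    hκ.2 ▸ sum_le_sum fun j _ ↦ by
      rw [div_le_iff₀ (hε.trans_le (hx j)), mul_comm]
      exact mul_le_mul_of_nonneg_left (hx j) (hκ.1 j)
  refine ⟨?_, by simp [tiltWeight, Fintype.sum_option]⟩
  rintro (_ | j)
  · exact sub_nonneg.2 hle
  · exact div_nonneg (mul_nonneg hε.le (hκ.1 j)) (hε.le.trans (hx j))

lemma wmean_tiltWeight (hx : ∀ j, x j ≠ 0) (g : ℝ → ℝ) :
    wmean (tiltWeight ε κ x) (fun t ↦ tiltAtom x t * g (tiltAtom x t)) =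
      ε * wmean κ fun j ↦ g (x j) := by
  simp only [wmean, Fintype.sum_option, tiltWeight, tiltAtom, zero_mul, mul_zero,
    zero_add, mul_sum]
  exact sum_congr rfl fun j _ ↦ by field_simp [hx j]

end Tilt

section SignedFejer

variable {R : ℕ} [NeZero R] {σ : ℝ}

/-- The Fejér nodes of the `4R`-th roots of unity, moved into `[ε, ε + R²]`. -/
def shiftedNode (ε : ℝ) (R : ℕ) [NeZero R] (j : ZMod (4 * R)) : ℝ :=
  ε + fejerNode R (ZMod.stdAddChar j)

lemma le_shiftedNode (ε : ℝ) (j : ZMod (4 * R)) : ε ≤ shiftedNode ε R j :=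
  le_add_of_nonneg_right (fejerNode_nonneg R _)

lemma shiftedNode_ne_zero {ε : ℝ} (hε : 0 < ε) (j : ZMod (4 * R)) : shiftedNode ε R j ≠ 0 :=
  (hε.trans_le (le_shiftedNode ε j)).ne'

/-- The probability weights on the `4R`-th roots of unity with density proportional to
`1 + σ (-1)^j` against the Fejér kernel. -/
def signedFejer (R : ℕ) [NeZero R] (σ : ℝ) (j : ZMod (4 * R)) : ℝ :=
  (1 + σ * (-1) ^ j.val) * fejerWeight R (ZMod.stdAddChar j) /
    ∑ i : ZMod (4 * R), fejerWeight R (ZMod.stdAddChar i)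

lemma one_le_sum_fejerWeight :
    1 ≤ ∑ j : ZMod (4 * R), fejerWeight R (ZMod.stdAddChar j) :=
  calc (1 : ℝ) = fejerWeight R (ZMod.stdAddChar (0 : ZMod (4 * R))) := by
        rw [AddChar.map_zero_eq_one, fejerWeight_one]
    _ ≤ _ := single_le_sum (f := fun j : ZMod (4 * R) ↦ fejerWeight R (ZMod.stdAddChar j))
        (fun j _ ↦ fejerWeight_nonneg R _) (mem_univ 0)

lemma wmean_signedFejer (f : ZMod (4 * R) → ℝ) :
    wmean (signedFejer R σ) f =
      (∑ j, fejerWeight R (ZMod.stdAddChar j) * f j +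
        σ * ∑ j, (-1) ^ j.val * (fejerWeight R (ZMod.stdAddChar j) * f j)) /
      ∑ j : ZMod (4 * R), fejerWeight R (ZMod.stdAddChar j) := by
  rw [wmean, mul_sum, ← sum_add_distrib, sum_div]
  exact sum_congr rfl fun j _ ↦ by rw [signedFejer]; ring

lemma wmean_signedFejer_pow {t : ℕ} (ht : t ≤ R) (ε : ℝ) :
    wmean (signedFejer R σ) (fun j ↦ shiftedNode ε R j ^ t) =
      (∑ j, fejerWeight R (ZMod.stdAddChar j) * shiftedNode ε R j ^ t) /
      ∑ j : ZMod (4 * R), fejerWeight R (ZMod.stdAddChar j) := by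
  have hzero : ∑ j : ZMod (4 * R), (-1 : ℝ) ^ j.val * (fejerWeight R (ZMod.stdAddChar j) *
      shiftedNode ε R j ^ t) = 0 := by
    simp_rw [shiftedNode, add_pow, mul_sum]
    rw [sum_comm]
    refine sum_eq_zero fun i _ ↦ ?_
    rw [← mul_zero (ε ^ i * (t.choose i : ℝ)),
      ← sum_sign_mul_fejerWeight_mul_fejerNode_pow (R := R) ((Nat.sub_le t i).trans ht), mul_sum]
    exact sum_congr rfl fun j _ ↦ by ring
  rw [wmean_signedFejer, hzero, mul_zero, add_zero]

lemma signedFejer_mem_stdSimplex (hσ : |σ| ≤ 1) :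
    signedFejer R σ ∈ stdSimplex ℝ (ZMod (4 * R)) := by
  have hpos := zero_lt_one.trans_le (one_le_sum_fejerWeight (R := R))
  refine ⟨fun j ↦ ?_, ?_⟩
  · have hsign : |σ * (-1) ^ j.val| ≤ 1 := by simpa [abs_mul] using hσ
    exact div_nonneg (mul_nonneg (by linarith [neg_le_of_abs_le hsign]) (fejerWeight_nonneg R _))
      hpos.le
  · have h := wmean_signedFejer_pow (R := R) (σ := σ) (Nat.zero_le R) 0
    simpa [wmean, hpos.ne'] using h

lemma wmean_signedFejer_shiftedNode_le {ε : ℝ} (hε : ε ≤ 1) (hσ : |σ| ≤ 1) :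
    wmean (signedFejer R σ) (shiftedNode ε R) ≤ 5 * R := by
  have hR : (1 : ℝ) ≤ R := Nat.one_le_cast.2 (NeZero.pos R)
  have hsum := one_le_sum_fejerWeight (R := R)
  have hmean := wmean_signedFejer_pow (R := R) (σ := σ) (NeZero.pos R) 0
  simp only [shiftedNode, zero_add, pow_one] at hmean
  rw [funext fun j ↦ shiftedNode.eq_1 ε R j, wmean_add,
    wmean_const (signedFejer_mem_stdSimplex hσ), hmean]
  have hnum : ∑ j : ZMod (4 * R), fejerWeight R (ZMod.stdAddChar j) *
      fejerNode R (ZMod.stdAddChar j) ≤ 4 * R := by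
    refine (sum_le_card_nsmul _ _ 1 fun j _ ↦
      fejerWeight_mul_fejerNode_le_one (AddChar.norm_apply _ _) R).trans_eq ?_
    simp [ZMod.card]
  have := (div_le_self (sum_nonneg fun j _ ↦
    mul_nonneg (fejerWeight_nonneg R _) (fejerNode_nonneg R _)) hsum).trans hnum
  linarith

end SignedFejer

/-- Two laws `p`, `q` of the same variable `τ ≥ 0` of mean `ε` which agree in all moments of order
at most `R + 1`, but differ by at least `η` in the mean of `-τ log τ`. -/
structure MatchedPriors {T : Type*} [Fintype T] (ε η : ℝ) (R : ℕ) (p q τ : T → ℝ) : Prop where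
  left_mem : p ∈ stdSimplex ℝ T
  right_mem : q ∈ stdSimplex ℝ T
  atom_eq_zero_or_le : ∀ t, τ t = 0 ∨ ε ≤ τ t
  atom_le : ∀ t, τ t ≤ ε + R ^ 2
  mean_eq : wmean p τ = ε
  moment_two_le : wmean p (fun t ↦ τ t ^ 2) ≤ 5 * R
  moment_eq : ∀ m ≤ R + 1, wmean p (fun t ↦ τ t ^ m) = wmean q fun t ↦ τ t ^ m
  gap : η ≤ wmean p (fun t ↦ negMulLog (τ t)) - wmean q fun t ↦ negMulLog (τ t)

lemma tiltWeight_signedFejer_moment_eq {R m : ℕ} [NeZero R] {ε σ σ' : ℝ} (hε : 0 < ε)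
    (hσ : |σ| ≤ 1) (hσ' : |σ'| ≤ 1) (hm : m ≤ R + 1) :
    wmean (tiltWeight ε (signedFejer R σ) (shiftedNode ε R))
        (fun t ↦ tiltAtom (shiftedNode ε R) t ^ m) =
      wmean (tiltWeight ε (signedFejer R σ') (shiftedNode ε R))
        fun t ↦ tiltAtom (shiftedNode ε R) t ^ m := by
  have hx := le_shiftedNode (R := R) ε
  have hx0 := shiftedNode_ne_zero (R := R) hε
  rcases m with _ | m
  · simp only [pow_zero]
    rw [wmean_const (tiltWeight_mem_stdSimplex (signedFejer_mem_stdSimplex hσ) hε hx),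
      wmean_const (tiltWeight_mem_stdSimplex (signedFejer_mem_stdSimplex hσ') hε hx)]
  · simp only [pow_succ']
    rw [wmean_tiltWeight hx0 fun y ↦ y ^ m, wmean_tiltWeight hx0 fun y ↦ y ^ m,
      wmean_signedFejer_pow (Nat.le_of_succ_le_succ hm),
      wmean_signedFejer_pow (Nat.le_of_succ_le_succ hm)]

lemma wmean_negMulLog_tiltWeight_sub_ge {R : ℕ} [NeZero R] {ε B : ℝ} (hε : 0 < ε)
    (hsum : ∑ j : ZMod (4 * R), fejerWeight R (ZMod.stdAddChar j) ≤ B)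
    (hlog : ∑ j : ZMod (4 * R), (-1 : ℝ) ^ j.val *
      (fejerWeight R (ZMod.stdAddChar j) * log (shiftedNode ε R j)) ≤ -1) :
    2 * ε / B ≤
      wmean (tiltWeight ε (signedFejer R 1) (shiftedNode ε R))
        (fun t ↦ negMulLog (tiltAtom (shiftedNode ε R) t)) -
      wmean (tiltWeight ε (signedFejer R (-1)) (shiftedNode ε R))
        fun t ↦ negMulLog (tiltAtom (shiftedNode ε R) t) := by
  have hx0 := shiftedNode_ne_zero (R := R) hε
  have hpos := zero_lt_one.trans_le (one_le_sum_fejerWeight (R := R))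
  simp only [negMulLog, neg_mul_comm]
  rw [wmean_tiltWeight hx0 fun y ↦ -log y, wmean_tiltWeight hx0 fun y ↦ -log y,
    wmean_signedFejer, wmean_signedFejer]
  simp only [mul_neg, sum_neg_distrib]
  set S := ∑ j : ZMod (4 * R), fejerWeight R (ZMod.stdAddChar j)
  set L := ∑ j : ZMod (4 * R), (-1 : ℝ) ^ j.val *
    (fejerWeight R (ZMod.stdAddChar j) * log (shiftedNode ε R j))
  calc 2 * ε / B ≤ 2 * ε / S := by gcongr
    _ ≤ 2 * ε * -L / S := by
      gcongr ?_ / S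
      exact le_mul_of_one_le_right (by positivity) (by linarith)
    _ = _ := by ring

lemma exists_matchedPriors : ∃ ε η : ℝ, 0 < ε ∧ ε ≤ 1 ∧ 0 < η ∧ ∀ (R : ℕ) [NeZero R],
    ∃ p q τ : Option (ZMod (4 * R)) → ℝ, MatchedPriors ε η R p q τ := by
  obtain ⟨ε, B, hε, hε1, hB, hfejer⟩ := exists_fejer_log_gap
  refine ⟨ε, 2 * ε / B, hε, hε1, by positivity, fun R _ ↦ ?_⟩
  obtain ⟨hsum, hlog⟩ := hfejer R
  have hx := le_shiftedNode (R := R) ε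
  have hx0 := shiftedNode_ne_zero (R := R) hε
  have habs : |(1 : ℝ)| ≤ 1 := abs_one.le
  have habs' : |(-1 : ℝ)| ≤ 1 := by simp
  refine ⟨tiltWeight ε (signedFejer R 1) (shiftedNode ε R),
    tiltWeight ε (signedFejer R (-1)) (shiftedNode ε R), tiltAtom (shiftedNode ε R),
    { left_mem := tiltWeight_mem_stdSimplex (signedFejer_mem_stdSimplex habs) hε hx
      right_mem := tiltWeight_mem_stdSimplex (signedFejer_mem_stdSimplex habs') hε hx
      atom_eq_zero_or_le := ?_
      atom_le := ?_
      mean_eq := ?_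
      moment_two_le := ?_
      moment_eq := fun m hm ↦ tiltWeight_signedFejer_moment_eq hε habs habs' hm
      gap := wmean_negMulLog_tiltWeight_sub_ge hε hsum hlog }⟩
  · rintro (_ | j)
    exacts [.inl rfl, .inr (hx j)]
  · rintro (_ | j)
    exacts [add_nonneg hε.le (sq_nonneg _),
      add_le_add_right (fejerNode_le (AddChar.norm_apply _ _) R) ε]
  · have h := wmean_tiltWeight (ε := ε) (κ := signedFejer R 1) hx0 fun _ ↦ 1
    simpa only [mul_one, wmean_const (signedFejer_mem_stdSimplex habs)] using h
  · simp only [sq]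
    rw [wmean_tiltWeight hx0 fun y ↦ y]
    exact (mul_le_of_le_one_left (wmean_nonneg (signedFejer_mem_stdSimplex habs)
      fun j ↦ hε.le.trans (hx j)) hε1).trans (wmean_signedFejer_shiftedNode_le hε1 habs)

end MatchedPriors

section LeCam

open Finset

variable {Θ ι : Type*} [Fintype Θ] {S : Finset ι} {f : Θ → ι → ℝ} {a b : Θ → ℝ}

lemma sum_wmean_mul_sub_sq_le {H : Θ → ℝ} {est : ι → ℝ} {r : ℝ} (hf : ∀ θ, ∀ N ∈ S, 0 ≤ f θ N)
    (hf_sum : ∀ θ, ∑ N ∈ S, f θ N = 1) (ha : 0 ≤ a) (ha_sum : ∑ θ, a θ ≤ 1) (hr₀ : 0 ≤ r)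
    (hr : ∀ θ, ∑ N ∈ S, f θ N * (est N - H θ) ^ 2 ≤ r) (h : ℝ) :
    ∑ N ∈ S, wmean a (fun θ ↦ f θ N) * (est N - h) ^ 2 ≤
      2 * r + 2 * wmean a (fun θ ↦ (H θ - h) ^ 2) := by
  have hθ (θ : Θ) : ∑ N ∈ S, f θ N * (est N - h) ^ 2 ≤ 2 * r + 2 * (H θ - h) ^ 2 := calc
    _ ≤ ∑ N ∈ S, (2 * (f θ N * (est N - H θ) ^ 2) + f θ N * (2 * (H θ - h) ^ 2)) := by
      gcongr with N hN
      nlinarith [mul_nonneg (hf θ N hN) (sq_nonneg (est N - H θ - (H θ - h)))]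
    _ = 2 * ∑ N ∈ S, f θ N * (est N - H θ) ^ 2 + 2 * (H θ - h) ^ 2 := by
      rw [sum_add_distrib, ← mul_sum, ← sum_mul, hf_sum, one_mul]
    _ ≤ _ := by gcongr; exact hr θ
  calc
    _ = ∑ θ, a θ * ∑ N ∈ S, f θ N * (est N - h) ^ 2 := by
      simp_rw [wmean, sum_mul, mul_sum, mul_assoc]
      exact sum_comm
    _ ≤ ∑ θ, a θ * (2 * r + 2 * (H θ - h) ^ 2) := by
      gcongr with θ
      exacts [ha θ, hθ θ]
    _ = (∑ θ, a θ) * (2 * r) + 2 * wmean a (fun θ ↦ (H θ - h) ^ 2) := by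
      rw [wmean, sum_mul, mul_sum, ← sum_add_distrib]
      exact sum_congr rfl fun θ _ ↦ by ring
    _ ≤ _ := add_le_add_left (mul_le_of_le_one_left (mul_nonneg zero_le_two hr₀) ha_sum) _

lemma sum_sub_sum_abs_sub_mul_sq_le {A B : ι → ℝ} (hA : ∀ N ∈ S, 0 ≤ A N)
    (hB : ∀ N ∈ S, 0 ≤ B N) (est : ι → ℝ) (h₁ h₂ : ℝ) :
    (∑ N ∈ S, A N - ∑ N ∈ S, |A N - B N|) * (h₁ - h₂) ^ 2 ≤
      2 * ∑ N ∈ S, A N * (est N - h₁) ^ 2 + 2 * ∑ N ∈ S, B N * (est N - h₂) ^ 2 := by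
  have h_overlap (N : ι) : A N - |A N - B N| ≤ min (A N) (B N) :=
    le_min (sub_le_self _ (abs_nonneg _)) (by linarith [le_abs_self (A N - B N)])
  have h_parallel (N : ι) : (h₁ - h₂) ^ 2 ≤ 2 * (est N - h₁) ^ 2 + 2 * (est N - h₂) ^ 2 := by
    nlinarith [sq_nonneg ((est N - h₁) + (est N - h₂))]
  rw [← sum_sub_distrib, sum_mul, mul_sum, mul_sum, ← sum_add_distrib]
  refine sum_le_sum fun N hN ↦ ?_
  calc
    _ ≤ min (A N) (B N) * (h₁ - h₂) ^ 2 := by gcongr; exact h_overlap N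
    _ ≤ min (A N) (B N) * (2 * (est N - h₁) ^ 2 + 2 * (est N - h₂) ^ 2) := by
      gcongr
      exacts [le_min (hA N hN) (hB N hN), h_parallel N]
    _ = 2 * (min (A N) (B N) * (est N - h₁) ^ 2) + 2 * (min (A N) (B N) * (est N - h₂) ^ 2) := by
      ring
    _ ≤ _ := by
      gcongr
      exacts [min_le_left _ _, min_le_right _ _]

/-- Le Cam's method with two fuzzy hypotheses; the priors may be sub-probabilities. -/
theorem sq_sub_le_of_le_risk {H : Θ → ℝ} {est : ι → ℝ} {r h₁ h₂ : ℝ}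
    (hf : ∀ θ, ∀ N ∈ S, 0 ≤ f θ N) (hf_sum : ∀ θ, ∑ N ∈ S, f θ N = 1)
    (ha : 0 ≤ a) (ha_sum : ∑ θ, a θ ≤ 1) (ha_half : 1 / 2 ≤ ∑ θ, a θ)
    (hb : 0 ≤ b) (hb_sum : ∑ θ, b θ ≤ 1) (hr₀ : 0 ≤ r)
    (hr : ∀ θ, ∑ N ∈ S, f θ N * (est N - H θ) ^ 2 ≤ r)
    (hD : ∑ N ∈ S, |wmean a (fun θ ↦ f θ N) - wmean b (fun θ ↦ f θ N)| ≤ 1 / 4) :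
    (h₁ - h₂) ^ 2 / 4 ≤ 8 * r +
      4 * (wmean a (fun θ ↦ (H θ - h₁) ^ 2) + wmean b (fun θ ↦ (H θ - h₂) ^ 2)) := by
  have h_nonneg {c : Θ → ℝ} (hc : 0 ≤ c) (N : ι) (hN : N ∈ S) : 0 ≤ wmean c (fun θ ↦ f θ N) :=
    sum_nonneg fun θ _ ↦ mul_nonneg (hc θ) (hf θ N hN)
  have h_mass : ∑ N ∈ S, wmean a (fun θ ↦ f θ N) = ∑ θ, a θ := by
    simp_rw [← wmean_sum, wmean, hf_sum, mul_one]
  have h_two := sum_sub_sum_abs_sub_mul_sq_le (h_nonneg ha) (h_nonneg hb) est h₁ h₂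
  have h_overlap : 1 / 4 * (h₁ - h₂) ^ 2 ≤ (∑ N ∈ S, wmean a (fun θ ↦ f θ N) -
      ∑ N ∈ S, |wmean a (fun θ ↦ f θ N) - wmean b (fun θ ↦ f θ N)|) * (h₁ - h₂) ^ 2 := by
    gcongr
    linarith
  linarith [sum_wmean_mul_sub_sq_le hf hf_sum ha ha_sum hr₀ hr h₁,
    sum_wmean_mul_sub_sq_le hf hf_sum hb hb_sum hr₀ hr h₂]

end LeCam

section EntropyRisk

open Finset

variable {k n : ℕ} {P Q : Fin k → ℝ}

lemma entropy_eq_sum_negMulLog (P : Fin k → ℝ) : entropy P = ∑ i, negMulLog (P i) := by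
  simp [entropy, negMulLog]

lemma entropy_nonneg (hP : P ∈ probVec k) : 0 ≤ entropy P := by
  rw [entropy_eq_sum_negMulLog]
  exact sum_nonneg fun i _ ↦ negMulLog_nonneg (hP.1 i) (mem_Icc_of_mem_stdSimplex hP i).2

lemma entropy_le_card (hP : P ∈ probVec k) : entropy P ≤ k := calc
  entropy P ≤ ∑ _i : Fin k, (1 : ℝ) := by
    rw [entropy_eq_sum_negMulLog]
    exact sum_le_sum fun i _ ↦ (negMulLog_le_one_sub_self (hP.1 i)).trans (by linarith [hP.1 i])
  _ = k := by simp

lemma multinomialPMF_nonneg (hP : 0 ≤ P) (n : ℕ) (N : Fin k → ℕ) : 0 ≤ multinomialPMF n P N := by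
  have : 0 ≤ ∏ i, P i ^ N i := prod_nonneg fun i _ ↦ pow_nonneg (hP i) _
  unfold multinomialPMF
  split_ifs <;> positivity

lemma multinomialPMF_of_mem_piAntidiag (P : Fin k → ℝ) {N : Fin k → ℕ}
    (hN : N ∈ piAntidiag univ n) :
    multinomialPMF n P N = n.factorial / (∏ i, ((N i).factorial : ℝ)) * ∏ i, P i ^ N i :=
  if_pos (mem_piAntidiag.1 hN).1

lemma sum_multinomialPMF (n : ℕ) (P : Fin k → ℝ) :
    ∑ N ∈ piAntidiag univ n, multinomialPMF n P N = (∑ i, P i) ^ n := by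
  rw [sum_pow_eq_sum_piAntidiag]
  refine sum_congr rfl fun N hN ↦ ?_
  rw [multinomialPMF_of_mem_piAntidiag P hN]
  have h := Nat.multinomial_spec univ N
  rw [(mem_piAntidiag.1 hN).1] at h
  congr 1
  rw [div_eq_iff (prod_ne_zero_iff.2 fun i _ ↦ by positivity), mul_comm]
  exact_mod_cast h.symm

lemma multinomialPMF_le_one (hP : P ∈ probVec k) {N : Fin k → ℕ} (hN : N ∈ piAntidiag univ n) :
    multinomialPMF n P N ≤ 1 := calc
  _ ≤ ∑ N ∈ piAntidiag univ n, multinomialPMF n P N :=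
    single_le_sum (fun N _ ↦ multinomialPMF_nonneg hP.1 n N) hN
  _ = 1 := by rw [sum_multinomialPMF, hP.2, one_pow]

lemma mseIID_eq_sum (n : ℕ) (P : Fin k → ℝ) (est : (Fin k → ℕ) → ℝ) :
    mseIID n P est = ∑ N ∈ piAntidiag univ n, multinomialPMF n P N * (est N - entropy P) ^ 2 := by
  refine tsum_eq_sum fun N hN ↦ ?_
  rw [multinomialPMF, if_neg fun h ↦ hN (mem_piAntidiag.2 ⟨h, fun i _ ↦ mem_univ i⟩), zero_mul]

lemma mseIID_nonneg (hP : 0 ≤ P) (n : ℕ) (est : (Fin k → ℕ) → ℝ) : 0 ≤ mseIID n P est := by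
  rw [mseIID_eq_sum]
  exact sum_nonneg fun N _ ↦ mul_nonneg (multinomialPMF_nonneg hP n N) (sq_nonneg _)

lemma bddAbove_range_mseIID (n : ℕ) (est : (Fin k → ℕ) → ℝ) :
    BddAbove (Set.range fun P : probVec k ↦ mseIID n P.1 est) := by
  refine ⟨∑ N ∈ piAntidiag univ n, 1 * (|est N| + k) ^ 2, ?_⟩
  rintro _ ⟨⟨P, hP⟩, rfl⟩
  simp only [mseIID_eq_sum]
  refine sum_le_sum fun N hN ↦ mul_le_mul (multinomialPMF_le_one hP hN) ?_ (sq_nonneg _) zero_le_one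
  rw [sq_le_sq, abs_of_nonneg (by positivity : 0 ≤ |est N| + (k : ℝ))]
  refine (abs_sub _ _).trans ?_
  rw [abs_of_nonneg (entropy_nonneg hP)]
  gcongr
  exact entropy_le_card hP

lemma mseIID_le_iSup (hP : P ∈ probVec k) (n : ℕ) (est : (Fin k → ℕ) → ℝ) :
    mseIID n P est ≤ ⨆ Q : probVec k, mseIID n Q.1 est :=
  le_ciSup (bddAbove_range_mseIID n est) ⟨P, hP⟩

lemma iSup_mseIID_nonneg (k n : ℕ) (est : (Fin k → ℕ) → ℝ) :
    0 ≤ ⨆ Q : probVec k, mseIID n Q.1 est :=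
  Real.iSup_nonneg fun Q ↦ mseIID_nonneg Q.2.1 n est

lemma multinomialPMF_sqrt_mul (hP : 0 ≤ P) (hQ : 0 ≤ Q) (n : ℕ) (N : Fin k → ℕ) :
    multinomialPMF n (fun i ↦ √(P i * Q i)) N =
      √(multinomialPMF n P N) * √(multinomialPMF n Q N) := by
  have h_prod : √(∏ i, P i ^ N i) * √(∏ i, Q i ^ N i) = ∏ i, √(P i * Q i) ^ N i := by
    rw [← Real.sqrt_mul (prod_nonneg fun i _ ↦ pow_nonneg (hP i) _), ← prod_mul_distrib,
      ← Real.sqrt_sq (by positivity : 0 ≤ ∏ i, √(P i * Q i) ^ N i), ← prod_pow]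
    refine congrArg _ (prod_congr rfl fun i _ ↦ ?_)
    rw [← mul_pow, pow_right_comm, Real.sq_sqrt (mul_nonneg (hP i) (hQ i))]
  unfold multinomialPMF
  split_ifs
  · rw [Real.sqrt_mul (by positivity), Real.sqrt_mul (by positivity), mul_mul_mul_comm,
      Real.mul_self_sqrt (by positivity), h_prod]
  · simp

lemma sum_sqrt_mul_abs_le_sqrt_mseIID (hP : 0 ≤ P) (hQ : Q ∈ probVec k) (n : ℕ)
    (est : (Fin k → ℕ) → ℝ) :
    ∑ N ∈ piAntidiag univ n,
      √(multinomialPMF n P N) * √(multinomialPMF n Q N) * |est N - entropy P| ≤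
      √(mseIID n P est) := calc
  _ = ∑ N ∈ piAntidiag univ n,
      √(multinomialPMF n P N * (est N - entropy P) ^ 2) * √(multinomialPMF n Q N) := by
    refine sum_congr rfl fun N _ ↦ ?_
    rw [Real.sqrt_mul (multinomialPMF_nonneg hP n N), Real.sqrt_sq_eq_abs, mul_right_comm]
  _ ≤ √(∑ N ∈ piAntidiag univ n, multinomialPMF n P N * (est N - entropy P) ^ 2) *
      √(∑ N ∈ piAntidiag univ n, multinomialPMF n Q N) :=
    sum_sqrt_mul_sqrt_le _ (fun N ↦ mul_nonneg (multinomialPMF_nonneg hP n N) (sq_nonneg _))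
      fun N ↦ multinomialPMF_nonneg hQ.1 n N
  _ = √(mseIID n P est) := by
    rw [sum_multinomialPMF, hQ.2, one_pow, Real.sqrt_one, mul_one, mseIID_eq_sum]

theorem sum_sqrt_mul_pow_mul_abs_entropy_sub_le (hP : P ∈ probVec k) (hQ : Q ∈ probVec k) (n : ℕ)
    (est : (Fin k → ℕ) → ℝ) :
    (∑ i, √(P i * Q i)) ^ n * |entropy P - entropy Q| ≤
      √(mseIID n P est) + √(mseIID n Q est) := by
  rw [← sum_multinomialPMF, sum_mul]
  refine le_trans ?_ (add_le_add (sum_sqrt_mul_abs_le_sqrt_mseIID hP.1 hQ n est)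
    (sum_sqrt_mul_abs_le_sqrt_mseIID hQ.1 hP n est))
  rw [← sum_add_distrib]
  refine sum_le_sum fun N _ ↦ ?_
  rw [multinomialPMF_sqrt_mul hP.1 hQ.1,
    mul_comm (√(multinomialPMF n Q N)) (√(multinomialPMF n P N)), ← mul_add]
  gcongr
  rw [abs_sub_comm (est N)]
  exact abs_sub_le _ _ _

theorem sq_mul_sq_entropy_sub_le_Rstar (hP : P ∈ probVec k) (hQ : Q ∈ probVec k) (n : ℕ) :
    ((∑ i, √(P i * Q i)) ^ n * (entropy P - entropy Q)) ^ 2 / 4 ≤ Rstar k n := by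
  refine le_ciInf fun est ↦ ?_
  set r := ⨆ P : probVec k, mseIID n P.1 est
  have hr : 0 ≤ r := iSup_mseIID_nonneg k n est
  have h : |(∑ i, √(P i * Q i)) ^ n * (entropy P - entropy Q)| ≤ 2 * √r := calc
    _ = (∑ i, √(P i * Q i)) ^ n * |entropy P - entropy Q| := by
      rw [abs_mul, abs_of_nonneg (by positivity)]
    _ ≤ √(mseIID n P est) + √(mseIID n Q est) :=
      sum_sqrt_mul_pow_mul_abs_entropy_sub_le hP hQ n est
    _ ≤ √r + √r := by
      gcongr
      exacts [mseIID_le_iSup hP n est, mseIID_le_iSup hQ n est]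
    _ = 2 * √r := (two_mul _).symm
  have h_sq := sq_le_sq' (by linarith [abs_nonneg ((∑ i, √(P i * Q i)) ^ n *
    (entropy P - entropy Q)), Real.sqrt_nonneg r]) h
  rw [sq_abs, mul_pow 2, Real.sq_sqrt hr] at h_sq
  linarith

end EntropyRisk

section TwoAtoms

open Finset

variable {m n : ℕ} {x δ : ℝ}

/-- The Bernoulli distribution `(x, 1 - x)`, as a vector with `m` further zero entries. -/
def twoAtom (m : ℕ) (x : ℝ) : Fin (m + 2) → ℝ := Fin.cons x (Fin.cons (1 - x) 0)

lemma twoAtom_mem_probVec (hx : x ∈ Set.Icc 0 1) : twoAtom m x ∈ probVec (m + 2) := by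
  refine ⟨Fin.cases hx.1 (Fin.cases (sub_nonneg.2 hx.2) fun _ ↦ le_rfl), ?_⟩
  simp [twoAtom, Fin.sum_univ_succ]

lemma entropy_twoAtom (m : ℕ) (x : ℝ) : entropy (twoAtom m x) = binEntropy x := by
  simp [entropy_eq_sum_negMulLog, twoAtom, Fin.sum_univ_succ,
    binEntropy_eq_negMulLog_add_negMulLog_one_sub]

lemma one_sub_le_sum_sqrt_twoAtom_mul (hδ₀ : 0 ≤ δ) (hδ : δ ≤ 1 / 8) :
    1 - 2 * δ ^ 2 ≤ ∑ i, √(twoAtom m (1 / 4) i * twoAtom m (1 / 4 + δ) i) := by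
  have h_left : 1 / 4 + δ / 2 - δ ^ 2 ≤ √(1 / 4 * (1 / 4 + δ)) :=
    Real.le_sqrt_of_sq_le (by nlinarith [pow_nonneg hδ₀ 2, pow_nonneg hδ₀ 3])
  have h_right : 3 / 4 - δ / 2 - δ ^ 2 ≤ √((1 - 1 / 4) * (1 - (1 / 4 + δ))) :=
    Real.le_sqrt_of_sq_le (by nlinarith [pow_nonneg hδ₀ 2, pow_nonneg hδ₀ 3])
  simp only [twoAtom, Fin.sum_univ_succ, Fin.cons_zero, Fin.cons_succ, Pi.zero_apply, mul_zero,
    Real.sqrt_zero, sum_const_zero, add_zero]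
  linarith

lemma mul_le_binEntropy_sub (hδ₀ : 0 < δ) (hδ : δ ≤ 1 / 8) :
    2 / 5 * δ ≤ binEntropy (1 / 4 + δ) - binEntropy (1 / 4) := by
  have h_odds : (1 / 4 + δ) / (1 - (1 / 4 + δ)) ≤ 3 / 5 := by
    rw [div_le_iff₀ (by linarith)]
    linarith
  have h_deriv : 2 / 5 ≤ log (1 - (1 / 4 + δ)) - log (1 / 4 + δ) := calc
    (2 / 5 : ℝ) ≤ 1 - ((1 - (1 / 4 + δ)) / (1 / 4 + δ))⁻¹ := by
      rw [inv_div]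
      linarith
    _ ≤ log ((1 - (1 / 4 + δ)) / (1 / 4 + δ)) :=
      one_sub_inv_le_log_of_pos (div_pos (by linarith) (by linarith))
    _ = _ := log_div (by linarith) (by linarith)
  have h_slope := strictConcave_binEntropy.concaveOn.le_slope_of_hasDerivAt
    (x := 1 / 4) (y := 1 / 4 + δ) ⟨by norm_num, by norm_num⟩ ⟨by linarith, by linarith⟩
    (by linarith) (hasDerivAt_binEntropy (by linarith) (by linarith))
  rw [slope_def_field, add_sub_cancel_left, le_div_iff₀ hδ₀] at h_slope
  exact (mul_le_mul_of_nonneg_right h_deriv hδ₀.le).trans h_slope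

/-- The parametric rate: two Bernoulli distributions at distance of order `1 / √n` cannot be
told apart from `n` samples. -/
theorem inv_le_Rstar {k n : ℕ} (hk : 2 ≤ k) (hn : 1 ≤ n) : 1 / (6400 * (n : ℝ)) ≤ Rstar k n := by
  obtain ⟨m, rfl⟩ := Nat.exists_eq_add_of_le' hk
  have hn' : (1 : ℝ) ≤ n := Nat.one_le_cast.2 hn
  set δ : ℝ := 1 / (8 * √n) with hδ_def
  have hδ₀ : 0 < δ := by positivity
  have hδ : δ ≤ 1 / 8 := by
    have := Real.one_le_sqrt.2 hn'
    exact one_div_le_one_div_of_le (by norm_num) (by linarith)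
  have hδ_sq : δ ^ 2 = 1 / (64 * n) := by
    rw [hδ_def, div_pow, mul_pow, Real.sq_sqrt (Nat.cast_nonneg n)]
    norm_num
  have h_affinity : 1 / 2 ≤ (∑ i, √(twoAtom m (1 / 4 + δ) i * twoAtom m (1 / 4) i)) ^ n := calc
    (1 / 2 : ℝ) ≤ 1 + n * -(2 * δ ^ 2) := by
      rw [hδ_sq]
      field_simp
      norm_num
    _ ≤ (1 + -(2 * δ ^ 2)) ^ n := one_add_mul_le_pow (by nlinarith) n
    _ ≤ _ := by
      simp_rw [mul_comm (twoAtom m (1 / 4 + δ) _), ← sub_eq_add_neg]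
      exact pow_le_pow_left₀ (by nlinarith) (one_sub_le_sum_sqrt_twoAtom_mul hδ₀.le hδ) n
  have h_gap : 2 / 5 * δ ≤ entropy (twoAtom m (1 / 4 + δ)) - entropy (twoAtom m (1 / 4)) := by
    simpa only [entropy_twoAtom] using mul_le_binEntropy_sub hδ₀ hδ
  calc
    1 / (6400 * (n : ℝ)) = (1 / 2 * (2 / 5 * δ)) ^ 2 / 4 := by
      rw [mul_pow, mul_pow, hδ_sq]
      field_simp
      norm_num
    _ ≤ _ := by gcongr
    _ ≤ Rstar (m + 2) n := sq_mul_sq_entropy_sub_le_Rstar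
      (twoAtom_mem_probVec ⟨by linarith, by linarith⟩)
      (twoAtom_mem_probVec ⟨by norm_num, by norm_num⟩) n

end TwoAtoms

section Poisson

open Finset

variable {T : Type*} [Fintype T]

lemma abs_exp_sub_sum_range_le (x : ℝ) (s : ℕ) :
    |exp x - ∑ i ∈ range s, x ^ i / i.factorial| ≤ |x| ^ s / s.factorial * exp |x| := by
  have h_exp (z : ℝ) : HasSum (fun i : ℕ ↦ z ^ i / (i.factorial : ℝ)) (exp z) := by
    simpa only [Real.exp_eq_exp_ℝ] using NormedSpace.expSeries_div_hasSum_exp z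
  have h_rem : exp x - ∑ i ∈ range s, x ^ i / i.factorial =
      ∑' i, x ^ (i + s) / ((i + s).factorial : ℝ) := by
    rw [← (h_exp x).tsum_eq, ← (h_exp x).summable.sum_add_tsum_nat_add s, add_sub_cancel_left]
  rw [h_rem, ← Real.norm_eq_abs]
  refine tsum_of_norm_bounded ((h_exp |x|).mul_left _) fun i ↦ ?_
  rw [norm_div, norm_pow, Real.norm_eq_abs, Real.norm_natCast, div_mul_div_comm, ← pow_add,
    add_comm s i]
  gcongr
  rw [mul_comm]
  exact_mod_cast Nat.le_of_dvd (Nat.factorial_pos _)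
    (Nat.factorial_mul_factorial_dvd_factorial_add i s)

lemma pow_div_factorial_mul_le {x : ℝ} (hx : 0 ≤ x) (s t : ℕ) :
    x ^ t / t.factorial * (x ^ s / s.factorial) ≤ (2 * x) ^ (t + s) / (t + s).factorial := by
  have h_choose : ((t + s).choose t : ℝ) * (t.factorial * s.factorial) = (t + s).factorial := by
    rw [← mul_assoc, Nat.choose_symm_add]
    exact_mod_cast Nat.add_choose_mul_factorial_mul_factorial t s
  rw [div_mul_div_comm, ← pow_add, mul_pow, div_le_div_iff₀ (by positivity) (by positivity),
    ← h_choose, mul_left_comm, ← mul_assoc]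
  gcongr
  exact_mod_cast Nat.choose_le_two_pow _ _

lemma pow_div_factorial_mul_le_pow {x : ℝ} (hx : 0 ≤ x) {r s t : ℕ} (hr : 0 < r)
    (hxr : 2 * exp 1 * x ≤ r) (hrt : r ≤ t + s) :
    x ^ t / t.factorial * (x ^ s / s.factorial) ≤ (2 * exp 1 * x / r) ^ r := by
  have hr' : (0 : ℝ) < r := Nat.cast_pos.2 hr
  set u := t + s
  have hu : 2 * x ≤ 2 * x / r * u := by
    rw [div_mul_eq_mul_div, le_div_iff₀ hr']
    gcongr
  calc
    _ ≤ (2 * x) ^ u / u.factorial := pow_div_factorial_mul_le hx s t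
    _ ≤ (2 * x / r * u) ^ u / u.factorial := by gcongr
    _ = (2 * x / r) ^ u * ((u : ℝ) ^ u / u.factorial) := by rw [mul_pow, mul_div_assoc]
    _ ≤ (2 * x / r) ^ u * exp u := by
      gcongr
      exact Real.pow_div_factorial_le_exp _ (Nat.cast_nonneg u) u
    _ = (2 * exp 1 * x / r) ^ u := by
      rw [← Real.exp_one_pow, ← mul_pow]
      congr 1
      ring
    _ ≤ (2 * exp 1 * x / r) ^ r :=
      pow_le_pow_of_le_one (by positivity) ((div_le_one hr').2 hxr) hrt

/-- The probability that a Poisson variable of mean `x` equals `t`, for a real parameter `x`. -/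
def poissonWeight (x : ℝ) (t : ℕ) : ℝ := exp (-x) * x ^ t / t.factorial

lemma poissonWeight_nonneg {x : ℝ} (hx : 0 ≤ x) (t : ℕ) : 0 ≤ poissonWeight x t := by
  unfold poissonWeight
  positivity

lemma sum_poissonWeight_le_one {x : ℝ} (hx : 0 ≤ x) (n : ℕ) :
    ∑ t : Fin n, poissonWeight x t ≤ 1 := by
  rw [Fin.sum_univ_eq_sum_range (poissonWeight x)]
  simp_rw [poissonWeight, mul_div_assoc]
  rw [← mul_sum, Real.exp_neg, inv_mul_le_one₀ (Real.exp_pos x)]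
  exact Real.sum_le_exp_of_nonneg hx n

lemma sum_wmean_poissonWeight_le_one {p x : T → ℝ} (hp : p ∈ stdSimplex ℝ T) (hx : 0 ≤ x)
    (n : ℕ) : ∑ t : Fin n, wmean p (fun j ↦ poissonWeight (x j) t) ≤ 1 := by
  rw [← wmean_sum, ← wmean_const hp 1]
  exact wmean_mono hp fun j ↦ sum_poissonWeight_le_one (hx j) n

/-- The Taylor expansion of `exp (-x)` to order `s` turns `poissonWeight x t` into a polynomial. -/
def truncatedPoissonWeight (s : ℕ) (x : ℝ) (t : ℕ) : ℝ :=
  ∑ i ∈ range s, (-1) ^ i / i.factorial / t.factorial * x ^ (i + t)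

lemma abs_poissonWeight_sub_truncatedPoissonWeight_le {x X : ℝ} {r t : ℕ} (hx : 0 ≤ x)
    (hxX : x ≤ X) (hr : 0 < r) (hX : 2 * exp 1 * X ≤ r) :
    |poissonWeight x t - truncatedPoissonWeight (r - t) x t| ≤
      exp X * (2 * exp 1 * X / r) ^ r := by
  have h_factor : poissonWeight x t - truncatedPoissonWeight (r - t) x t =
      x ^ t / t.factorial * (exp (-x) - ∑ i ∈ range (r - t), (-x) ^ i / i.factorial) := by
    rw [poissonWeight, truncatedPoissonWeight, mul_sub, mul_sum]
    congr 1
    · ring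
    · refine sum_congr rfl fun i _ ↦ ?_
      rw [neg_pow x, pow_add]
      ring
  have h_exp := abs_exp_sub_sum_range_le (-x) (r - t)
  rw [abs_neg, abs_of_nonneg hx] at h_exp
  rw [h_factor, abs_mul, abs_of_nonneg (by positivity)]
  calc
    _ ≤ x ^ t / t.factorial * (x ^ (r - t) / (r - t).factorial * exp x) := by gcongr
    _ ≤ X ^ t / t.factorial * (X ^ (r - t) / (r - t).factorial * exp X) := by
      have := hx.trans hxX
      gcongr
    _ = exp X * (X ^ t / t.factorial * (X ^ (r - t) / (r - t).factorial)) := by ring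
    _ ≤ _ := by
      gcongr
      exact pow_div_factorial_mul_le_pow (hx.trans hxX) hr hX (by omega)

lemma wmean_truncatedPoissonWeight (p x : T → ℝ) (s t : ℕ) :
    wmean p (fun j ↦ truncatedPoissonWeight s (x j) t) =
      ∑ i ∈ range s, (-1) ^ i / i.factorial / t.factorial * wmean p (fun j ↦ x j ^ (i + t)) := by
  simp_rw [truncatedPoissonWeight, wmean_sum, wmean_const_mul]

lemma abs_wmean_sub_le {p f g : T → ℝ} {c : ℝ} (hp : p ∈ stdSimplex ℝ T)
    (h : ∀ j, |f j - g j| ≤ c) : |wmean p f - wmean p g| ≤ c := by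
  rw [← wmean_sub]
  calc
    _ ≤ ∑ j, |p j * (f j - g j)| := abs_sum_le_sum_abs _ _
    _ = wmean p (fun j ↦ |f j - g j|) := by simp_rw [wmean, abs_mul, abs_of_nonneg (hp.1 _)]
    _ ≤ wmean p (fun _ ↦ c) := wmean_mono hp h
    _ = c := wmean_const hp c

theorem abs_wmean_poissonWeight_sub_le {p q x : T → ℝ} {X : ℝ} {r : ℕ} (hp : p ∈ stdSimplex ℝ T)
    (hq : q ∈ stdSimplex ℝ T) (hx : ∀ j, x j ∈ Set.Icc 0 X) (hr : 0 < r)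
    (hX : 2 * exp 1 * X ≤ r)
    (h_moment : ∀ m ≤ r, wmean p (fun j ↦ x j ^ m) = wmean q (fun j ↦ x j ^ m)) (t : ℕ) :
    |wmean p (fun j ↦ poissonWeight (x j) t) - wmean q (fun j ↦ poissonWeight (x j) t)| ≤
      2 * exp X * (2 * exp 1 * X / r) ^ r := by
  have h_match : wmean p (fun j ↦ truncatedPoissonWeight (r - t) (x j) t) =
      wmean q (fun j ↦ truncatedPoissonWeight (r - t) (x j) t) := by
    simp_rw [wmean_truncatedPoissonWeight]
    refine sum_congr rfl fun i hi ↦ ?_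
    rw [h_moment _ (by have := mem_range.1 hi; omega)]
  have h_trunc {w : T → ℝ} (hw : w ∈ stdSimplex ℝ T) := abs_wmean_sub_le hw fun j ↦
    abs_poissonWeight_sub_truncatedPoissonWeight_le (t := t) (hx j).1 (hx j).2 hr hX
  have h_left := h_trunc hp
  rw [h_match] at h_left
  calc
    _ ≤ _ := abs_sub_le _ (wmean q fun j ↦ truncatedPoissonWeight (r - t) (x j) t) _
    _ ≤ _ := add_le_add h_left ((abs_sub_comm _ _).trans_le (h_trunc hq))
    _ = _ := by ring

end Poisson

section Poissonization

open Finset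

variable {k n : ℕ} {s : ℝ} {q : Fin k → ℝ}

lemma sum_piAntidiag_le_sum_fin {F : (Fin k → ℕ) → ℝ} (hF : 0 ≤ F) (n : ℕ) :
    ∑ N ∈ piAntidiag univ n, F N ≤ ∑ N : Fin k → Fin (n + 1), F fun i ↦ N i := by
  have h_inj : Function.Injective fun (N : Fin k → Fin (n + 1)) (i : Fin k) ↦ (N i : ℕ) :=
    fun _ _ h ↦ funext fun i ↦ Fin.ext (congrFun h i)
  rw [← sum_image (f := F) (g := fun (N : Fin k → Fin (n + 1)) i ↦ (N i : ℕ)) h_inj.injOn]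
  refine sum_le_sum_of_subset_of_nonneg (fun N hN ↦ ?_) fun N _ _ ↦ hF N
  have h_lt (i : Fin k) : N i < n + 1 := by
    rw [Nat.lt_succ_iff, ← (mem_piAntidiag.1 hN).1]
    exact single_le_sum (fun _ _ ↦ Nat.zero_le _) (mem_univ i)
  exact mem_image.2 ⟨fun i ↦ ⟨N i, h_lt i⟩, mem_univ _, rfl⟩

lemma one_le_mul_poissonWeight_self (hn : 1 ≤ n) : 1 ≤ exp 1 * n * poissonWeight n n := by
  have hn' : (1 : ℝ) ≤ n := Nat.one_le_cast.2 hn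
  have h_stirling : Stirling.stirlingSeq n ≤ exp 1 / √2 := by
    obtain ⟨m, rfl⟩ := Nat.exists_eq_add_of_le' hn
    exact (Stirling.stirlingSeq'_antitone (Nat.zero_le m)).trans_eq Stirling.stirlingSeq_one
  have h_fact : (n.factorial : ℝ) ≤ exp 1 * √n * (n / exp 1) ^ n := by
    rw [Stirling.stirlingSeq, div_le_iff₀ (by positivity), Real.sqrt_mul zero_le_two] at h_stirling
    refine h_stirling.trans_eq ?_
    field_simp
  have h_weight : poissonWeight n n = (n / exp 1) ^ n / n.factorial := by
    rw [poissonWeight, div_pow, Real.exp_one_pow, Real.exp_neg, inv_mul_eq_div]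
  rw [h_weight, ← mul_div_assoc, one_le_div (by positivity)]
  refine h_fact.trans ?_
  gcongr
  exact Real.sqrt_le_self_iff.2 (Or.inr hn')

/-- The vector `q` rescaled to total mass one; it is zero if `q` has total mass zero. -/
def normalizedMass (q : Fin k → ℝ) : Fin k → ℝ := fun i ↦ q i / ∑ j, q j

lemma normalizedMass_mem_probVec (hq : 0 ≤ q) (hq_sum : ∑ i, q i ≠ 0) :
    normalizedMass q ∈ probVec k :=
  ⟨fun i ↦ div_nonneg (hq i) (sum_nonneg fun j _ ↦ hq j), by
    simp_rw [normalizedMass, ← sum_div, div_self hq_sum]⟩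

/-- The likelihood ratio at `n` of the Poisson distributions of means `n * s` and `n`. It accounts
for the total mass `s` when a product of Poisson distributions is conditioned on its sum. -/
def poissonTilt (n : ℕ) (s : ℝ) : ℝ := (s * exp (1 - s)) ^ n

lemma poissonTilt_nonneg (n : ℕ) (hs : 0 ≤ s) : 0 ≤ poissonTilt n s := by
  unfold poissonTilt
  positivity

lemma poissonTilt_le_one (n : ℕ) (hs : 0 ≤ s) : poissonTilt n s ≤ 1 := by
  refine pow_le_one₀ (by positivity) ?_
  rw [← neg_sub s 1, Real.exp_neg, ← div_eq_mul_inv, div_le_one (Real.exp_pos _)]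
  linarith [Real.add_one_le_exp (s - 1)]

lemma one_sub_le_poissonTilt (n : ℕ) (hs : 1 / 2 ≤ s) :
    1 - 2 * n * (s - 1) ^ 2 ≤ poissonTilt n s := by
  have hs₀ : 0 < s := by linarith
  have h_exponent : -(2 * (s - 1) ^ 2) ≤ log s + (1 - s) := calc
    -(2 * (s - 1) ^ 2) ≤ -((s - 1) ^ 2 / s) := by
      rw [neg_le_neg_iff, div_le_iff₀ hs₀]
      nlinarith [sq_nonneg (s - 1)]
    _ = 1 - s⁻¹ + (1 - s) := by
      field_simp
      ring
    _ ≤ log s + (1 - s) := by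
      gcongr
      exact one_sub_inv_le_log_of_pos hs₀
  calc
    1 - 2 * n * (s - 1) ^ 2 = n * -(2 * (s - 1) ^ 2) + 1 := by ring
    _ ≤ n * (log s + (1 - s)) + 1 := by gcongr
    _ ≤ exp (n * (log s + (1 - s))) := Real.add_one_le_exp _
    _ = poissonTilt n s := by rw [Real.exp_nat_mul, Real.exp_add, Real.exp_log hs₀, poissonTilt]

lemma prod_poissonWeight_mul (hq_sum : ∑ i, q i ≠ 0) {N : Fin k → ℕ}
    (hN : N ∈ piAntidiag univ n) :
    ∏ i, poissonWeight (n * q i) (N i) =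
      poissonWeight n n * (poissonTilt n (∑ i, q i) * multinomialPMF n (normalizedMass q) N) := by
  have hN_sum : ∑ i, N i = n := (mem_piAntidiag.1 hN).1
  have h_prod : ∏ i, poissonWeight (n * q i) (N i) =
      exp (-(n * ∑ i, q i)) * (n ^ n * ∏ i, q i ^ N i) / ∏ i, ((N i).factorial : ℝ) := by
    simp_rw [poissonWeight, prod_div_distrib, prod_mul_distrib, mul_pow, prod_mul_distrib,
      prod_pow_eq_pow_sum, hN_sum, ← Real.exp_sum, sum_neg_distrib, mul_sum]
  have h_normalized : ∏ i, normalizedMass q i ^ N i = (∏ i, q i ^ N i) / (∑ i, q i) ^ n := by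
    simp_rw [normalizedMass, div_pow, prod_div_distrib, prod_pow_eq_pow_sum, hN_sum]
  have h_tilt : poissonTilt n (∑ i, q i) =
      (∑ i, q i) ^ n * (exp n * exp (-(n * ∑ i, q i))) := by
    rw [poissonTilt, mul_pow, ← Real.exp_nat_mul, ← Real.exp_add]
    ring_nf
  have h_exp : exp (-(n : ℝ)) * exp n = 1 := by rw [← Real.exp_add, neg_add_cancel, Real.exp_zero]
  rw [h_prod, multinomialPMF_of_mem_piAntidiag _ hN, h_normalized, h_tilt, poissonWeight]
  field_simp
  linear_combination -(∏ i, q i ^ N i) * h_exp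

end Poissonization

section NormalizedEntropy

open Finset

variable {k : ℕ}

lemma entropy_normalizedMass {q : Fin k → ℝ} (hq_sum : ∑ i, q i ≠ 0) :
    entropy (normalizedMass q) = (∑ i, negMulLog (q i)) / ∑ i, q i + log (∑ i, q i) := by
  rw [entropy_eq_sum_negMulLog]
  simp_rw [normalizedMass, div_eq_mul_inv, negMulLog_mul, sum_add_distrib, ← mul_sum, ← sum_mul]
  rw [negMulLog, Real.log_inv]
  field_simp

lemma abs_log_le_two_mul_abs_sub_one {s : ℝ} (hs : 1 / 2 ≤ s) : |log s| ≤ 2 * |s - 1| := by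
  have hs₀ : 0 < s := by linarith
  have h_inv : |1 - s⁻¹| ≤ 2 * |s - 1| := by
    have h_eq : 1 - s⁻¹ = (s - 1) / s := by field_simp
    rw [h_eq, abs_div, abs_of_pos hs₀, div_le_iff₀ hs₀]
    nlinarith [abs_nonneg (s - 1)]
  rw [abs_le]
  constructor
  · linarith [Real.one_sub_inv_le_log_of_pos hs₀, neg_abs_le (1 - s⁻¹)]
  · linarith [Real.log_le_sub_one_of_pos hs₀, le_abs_self (s - 1), abs_nonneg (s - 1)]

lemma sq_div_add_log_sub_le {s : ℝ} (hs : 1 / 2 ≤ s) (x h : ℝ) :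
    (x / s + log s - h) ^ 2 ≤ 12 * ((x - h) ^ 2 + (h ^ 2 + 1) * (s - 1) ^ 2) := by
  have hs₀ : 0 < s := by linarith
  have h_log : log s ^ 2 ≤ 4 * (s - 1) ^ 2 := by
    have h_sq := pow_le_pow_left₀ (abs_nonneg _) (abs_log_le_two_mul_abs_sub_one hs) 2
    rwa [mul_pow, sq_abs, sq_abs, show (2 : ℝ) ^ 2 = 4 by norm_num] at h_sq
  have h_div (y : ℝ) : (y / s) ^ 2 ≤ 4 * y ^ 2 := by
    rw [div_pow, div_le_iff₀ (pow_pos hs₀ 2)]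
    nlinarith [mul_nonneg (sq_nonneg y) (show (0 : ℝ) ≤ s ^ 2 - 1 / 4 by nlinarith)]
  calc
    (x / s + log s - h) ^ 2 = ((x - h) / s + log s + -(h * (s - 1)) / s) ^ 2 := by
      field_simp
      ring
    _ ≤ 3 * (((x - h) / s) ^ 2 + log s ^ 2 + (-(h * (s - 1)) / s) ^ 2) := by
      generalize (x - h) / s = a
      generalize -(h * (s - 1)) / s = c
      nlinarith [sq_nonneg (a - log s), sq_nonneg (a - c), sq_nonneg (log s - c)]
    _ ≤ 3 * (4 * (x - h) ^ 2 + 4 * (s - 1) ^ 2 + 4 * (-(h * (s - 1))) ^ 2) := by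
      gcongr
      exacts [h_div _, h_div _]
    _ = 12 * ((x - h) ^ 2 + (h ^ 2 + 1) * (s - 1) ^ 2) := by ring

end NormalizedEntropy

section RandomMass

open Finset

variable {T : Type*} [Fintype T] {k n : ℕ} {V : Fin k → T → ℝ} {p q : T → ℝ} {δ : ℝ}

/-- The mass vector whose `i`-th entry is the value `V i` at the `i`-th coordinate of `θ`. When `θ`
has law `piWeight p` its entries are independent. -/
def massVector (V : Fin k → T → ℝ) (θ : Fin k → T) : Fin k → ℝ := fun i ↦ V i (θ i)

/-- Under the prior `piWeight p`, the mass vector `massVector V` is a random approximate probability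
vector: it is nonnegative with total mass at least `1 / 2` and of mean one. -/
structure RandomMass (V : Fin k → T → ℝ) (p : T → ℝ) : Prop where
  mem_stdSimplex : p ∈ stdSimplex ℝ T
  nonneg (i : Fin k) (t : T) : 0 ≤ V i t
  half_le_sum (θ : Fin k → T) : 1 / 2 ≤ ∑ i, massVector V θ i
  mean_eq_one : ∑ i, wmean p (V i) = 1

/-- The variance of the total mass of the random vector `massVector V` with independent entries. -/
def massVariance (V : Fin k → T → ℝ) (p : T → ℝ) : ℝ := ∑ i, wvar p (V i)

/-- The mean of the unnormalized entropy `∑ i, negMulLog (massVector V θ i)`. -/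
def meanEntropy (V : Fin k → T → ℝ) (p : T → ℝ) : ℝ := ∑ i, wmean p fun t ↦ negMulLog (V i t)

/-- The variance of the unnormalized entropy `∑ i, negMulLog (massVector V θ i)` of the random
vector `massVector V` with independent entries. -/
def entropyVariance (V : Fin k → T → ℝ) (p : T → ℝ) : ℝ :=
  ∑ i, wvar p fun t ↦ negMulLog (V i t)

/-- The product prior reweighted by `poissonTilt`, for which the mixture of the multinomial
distributions `normalizedMass (massVector V θ)` is a product of mixtures of Poisson weights,
restricted to the histograms of size `n`. -/
def tiltedWeight (n : ℕ) (V : Fin k → T → ℝ) (p : T → ℝ) (θ : Fin k → T) : ℝ :=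
  piWeight p θ * poissonTilt n (∑ i, massVector V θ i)

lemma RandomMass.sum_massVector_pos (h : RandomMass V p) (θ : Fin k → T) :
    0 < ∑ i, massVector V θ i := by
  linarith [h.half_le_sum θ]

lemma RandomMass.normalizedMass_mem_probVec (h : RandomMass V p) (θ : Fin k → T) :
    normalizedMass (massVector V θ) ∈ probVec k :=
  _root_.normalizedMass_mem_probVec (fun i ↦ h.nonneg i (θ i)) (h.sum_massVector_pos θ).ne'

lemma RandomMass.wmean_sq_sum_sub_one (h : RandomMass V p) :
    wmean (piWeight p) (fun θ ↦ (∑ i, massVector V θ i - 1) ^ 2) = massVariance V p := by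
  rw [massVariance, ← wvar_piWeight_sum h.mem_stdSimplex, wvar,
    wmean_piWeight_sum h.mem_stdSimplex, h.mean_eq_one]
  rfl

lemma RandomMass.tiltedWeight_nonneg (h : RandomMass V p) (n : ℕ) : 0 ≤ tiltedWeight n V p :=
  fun θ ↦ mul_nonneg ((piWeight_mem_stdSimplex h.mem_stdSimplex).1 θ)
    (poissonTilt_nonneg n (h.sum_massVector_pos θ).le)

lemma RandomMass.tiltedWeight_le_piWeight (h : RandomMass V p) (n : ℕ) :
    tiltedWeight n V p ≤ piWeight p :=
  fun θ ↦ mul_le_of_le_one_right ((piWeight_mem_stdSimplex h.mem_stdSimplex).1 θ)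
    (poissonTilt_le_one n (h.sum_massVector_pos θ).le)

lemma RandomMass.sum_tiltedWeight_le_one (h : RandomMass V p) (n : ℕ) :
    ∑ θ, tiltedWeight n V p θ ≤ 1 :=
  (sum_le_sum fun θ _ ↦ h.tiltedWeight_le_piWeight n θ).trans_eq
    (piWeight_mem_stdSimplex h.mem_stdSimplex).2

lemma RandomMass.one_sub_le_sum_tiltedWeight (h : RandomMass V p) (n : ℕ) :
    1 - 2 * n * massVariance V p ≤ ∑ θ, tiltedWeight n V p θ := by
  have hp := piWeight_mem_stdSimplex (ι := Fin k) h.mem_stdSimplex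
  calc
    _ = wmean (piWeight p) fun θ ↦ 1 - 2 * n * (∑ i, massVector V θ i - 1) ^ 2 := by
      rw [wmean_sub, wmean_const hp, wmean_const_mul, h.wmean_sq_sum_sub_one]
    _ ≤ _ := wmean_mono hp fun θ ↦ one_sub_le_poissonTilt n (h.half_le_sum θ)

lemma RandomMass.wmean_sq_entropy_sub_le (h : RandomMass V p) (n : ℕ) :
    wmean (tiltedWeight n V p)
        (fun θ ↦ (entropy (normalizedMass (massVector V θ)) - meanEntropy V p) ^ 2) ≤
      12 * (entropyVariance V p + (meanEntropy V p ^ 2 + 1) * massVariance V p) := by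
  have hp := piWeight_mem_stdSimplex (ι := Fin k) h.mem_stdSimplex
  have h_variance : wmean (piWeight p)
      (fun θ ↦ (∑ i, negMulLog (massVector V θ i) - meanEntropy V p) ^ 2) =
        entropyVariance V p := by
    rw [entropyVariance, ← wvar_piWeight_sum h.mem_stdSimplex fun i t ↦ negMulLog (V i t), wvar,
      wmean_piWeight_sum h.mem_stdSimplex fun i t ↦ negMulLog (V i t)]
    rfl
  rw [← h.wmean_sq_sum_sub_one, ← h_variance, ← wmean_const_mul, ← wmean_add, ← wmean_const_mul]
  refine sum_le_sum fun θ _ ↦ ?_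
  dsimp only
  rw [entropy_normalizedMass (h.sum_massVector_pos θ).ne']
  exact mul_le_mul (h.tiltedWeight_le_piWeight n θ)
    (sq_div_add_log_sub_le (h.half_le_sum θ) _ _) (sq_nonneg _) (hp.1 θ)

lemma RandomMass.mul_wmean_multinomialPMF (h : RandomMass V p) {N : Fin k → ℕ}
    (hN : N ∈ piAntidiag univ n) :
    poissonWeight n n * wmean (tiltedWeight n V p)
        (fun θ ↦ multinomialPMF n (normalizedMass (massVector V θ)) N) =
      ∏ i, wmean p (fun t ↦ poissonWeight (n * V i t) (N i)) := by
  rw [← wmean_piWeight_prod p fun i t ↦ poissonWeight (n * V i t) (N i), ← wmean_const_mul]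
  refine sum_congr rfl fun θ _ ↦ ?_
  have h_prod := prod_poissonWeight_mul (h.sum_massVector_pos θ).ne' hN
  simp only [massVector] at h_prod
  simp only [h_prod, tiltedWeight, massVector]
  ring

lemma RandomMass.sum_abs_wmean_multinomialPMF_sub_le (hp : RandomMass V p) (hq : RandomMass V q)
    (hn : 1 ≤ n)
    (hδ : ∀ i, ∀ t : ℕ, |wmean p (fun j ↦ poissonWeight (n * V i j) t) -
      wmean q (fun j ↦ poissonWeight (n * V i j) t)| ≤ δ) :
    ∑ N ∈ piAntidiag univ n,
        |wmean (tiltedWeight n V p)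
            (fun θ ↦ multinomialPMF n (normalizedMass (massVector V θ)) N) -
          wmean (tiltedWeight n V q)
            (fun θ ↦ multinomialPMF n (normalizedMass (massVector V θ)) N)| ≤
      exp 1 * n * (k * ((n + 1) * δ)) := by
  set mixture : (T → ℝ) → Fin k → ℕ → ℝ := fun p i t ↦ wmean p fun j ↦ poissonWeight (n * V i j) t
  have h_rate (i : Fin k) : ∀ j, 0 ≤ n * V i j := fun j ↦ mul_nonneg n.cast_nonneg (hp.nonneg i j)
  have h_mixture_nonneg {p : T → ℝ} (hp : RandomMass V p) (i : Fin k) (t : ℕ) :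
      0 ≤ mixture p i t :=
    wmean_nonneg hp.mem_stdSimplex fun j ↦ poissonWeight_nonneg (h_rate i j) t
  have h_term (N : Fin k → ℕ) (hN : N ∈ piAntidiag univ n) :
      |wmean (tiltedWeight n V p)
            (fun θ ↦ multinomialPMF n (normalizedMass (massVector V θ)) N) -
          wmean (tiltedWeight n V q)
            (fun θ ↦ multinomialPMF n (normalizedMass (massVector V θ)) N)| ≤
        exp 1 * n * |∏ i, mixture p i (N i) - ∏ i, mixture q i (N i)| := by
    rw [← hp.mul_wmean_multinomialPMF hN, ← hq.mul_wmean_multinomialPMF hN, ← mul_sub, abs_mul,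
      abs_of_nonneg (poissonWeight_nonneg n.cast_nonneg n), ← mul_assoc]
    exact le_mul_of_one_le_left (abs_nonneg _) (one_le_mul_poissonWeight_self hn)
  calc
    _ ≤ ∑ N ∈ piAntidiag univ n,
        exp 1 * n * |∏ i, mixture p i (N i) - ∏ i, mixture q i (N i)| := sum_le_sum h_term
    _ ≤ exp 1 * n * ∑ N : Fin k → Fin (n + 1),
        |∏ i, mixture p i (N i) - ∏ i, mixture q i (N i)| := by
      rw [← mul_sum]
      gcongr
      exact sum_piAntidiag_le_sum_fin
        (F := fun N ↦ |∏ i, mixture p i (N i) - ∏ i, mixture q i (N i)|) (fun _ ↦ abs_nonneg _) n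
    _ ≤ exp 1 * n * ∑ i, ∑ t : Fin (n + 1), |mixture p i t - mixture q i t| := by
      gcongr
      exact sum_abs_prod_sub_prod_le (F := fun i (t : Fin (n + 1)) ↦ mixture p i t)
        (G := fun i (t : Fin (n + 1)) ↦ mixture q i t) (fun i t ↦ h_mixture_nonneg hp i t)
        (fun i t ↦ h_mixture_nonneg hq i t)
        (fun i ↦ sum_wmean_poissonWeight_le_one hp.mem_stdSimplex (h_rate i) (n + 1))
        fun i ↦ sum_wmean_poissonWeight_le_one hq.mem_stdSimplex (h_rate i) (n + 1)
    _ ≤ exp 1 * n * ∑ _i : Fin k, ∑ _t : Fin (n + 1), δ := by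
      gcongr with i _ t
      exact hδ i t
    _ = _ := by simp

theorem RandomMass.sq_meanEntropy_sub_le (hp : RandomMass V p) (hq : RandomMass V q) (hn : 1 ≤ n)
    (h_mass : 2 * n * massVariance V p ≤ 1 / 2)
    (hδ : ∀ i, ∀ t : ℕ, |wmean p (fun j ↦ poissonWeight (n * V i j) t) -
      wmean q (fun j ↦ poissonWeight (n * V i j) t)| ≤ δ)
    (hδ_small : exp 1 * n * (k * ((n + 1) * δ)) ≤ 1 / 4) :
    (meanEntropy V p - meanEntropy V q) ^ 2 / 4 ≤ 8 * Rstar k n + 4 *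
      (12 * (entropyVariance V p + (meanEntropy V p ^ 2 + 1) * massVariance V p) +
        12 * (entropyVariance V q + (meanEntropy V q ^ 2 + 1) * massVariance V q)) := by
  have h_est (est : (Fin k → ℕ) → ℝ) :
      (meanEntropy V p - meanEntropy V q) ^ 2 / 4 ≤
        8 * (⨆ P : probVec k, mseIID n P.1 est) + 4 *
      (12 * (entropyVariance V p + (meanEntropy V p ^ 2 + 1) * massVariance V p) +
        12 * (entropyVariance V q + (meanEntropy V q ^ 2 + 1) * massVariance V q)) := by
    have h_two_point := sq_sub_le_of_le_risk (S := piAntidiag univ n)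
      (f := fun θ N ↦ multinomialPMF n (normalizedMass (massVector V θ)) N)
      (H := fun θ ↦ entropy (normalizedMass (massVector V θ))) (est := est)
      (h₁ := meanEntropy V p) (h₂ := meanEntropy V q)
      (fun θ N _ ↦ multinomialPMF_nonneg (hp.normalizedMass_mem_probVec θ).1 n N)
      (fun θ ↦ by rw [sum_multinomialPMF, (hp.normalizedMass_mem_probVec θ).2, one_pow])
      (hp.tiltedWeight_nonneg n) (hp.sum_tiltedWeight_le_one n)
      (by linarith [hp.one_sub_le_sum_tiltedWeight n])
      (hq.tiltedWeight_nonneg n) (hq.sum_tiltedWeight_le_one n) (iSup_mseIID_nonneg k n est)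
      (fun θ ↦ (mseIID_eq_sum n _ est).symm.trans_le
        (mseIID_le_iSup (hp.normalizedMass_mem_probVec θ) n est))
      ((hp.sum_abs_wmean_multinomialPMF_sub_le hq hn hδ).trans hδ_small)
    refine h_two_point.trans ?_
    gcongr
    exacts [hp.wmean_sq_entropy_sub_le n, hq.wmean_sq_entropy_sub_le n]
  rw [← sub_le_iff_le_add, ← div_le_iff₀' (by norm_num)]
  refine le_ciInf fun est ↦ ?_
  rw [div_le_iff₀' (by norm_num), sub_le_iff_le_add]
  exact h_est est

end RandomMass

section RemainderMass

variable {T : Type*} {m n : ℕ} {α L W Δ δ : ℝ} {v p q : T → ℝ}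

/-- The family with a deterministic entry `1 - α`, followed by `m` identically distributed random
entries `v`. -/
def remainderMass (m : ℕ) (α : ℝ) (v : T → ℝ) : Fin (m + 1) → T → ℝ :=
  Fin.cons (fun _ ↦ 1 - α) fun _ ↦ v

lemma sum_remainderMass (m : ℕ) (α : ℝ) (v : T → ℝ) (F : (T → ℝ) → ℝ) :
    ∑ i, F (remainderMass m α v i) = F (fun _ ↦ 1 - α) + m * F v := by
  simp [Fin.sum_univ_succ, remainderMass]

variable [Fintype T]

/-- Under `p`, the `m` random entries `v` of `remainderMass` carry mean mass `α` and second moment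
at most `W` in total, and an entry of mass `x` contributes an entropy at most `L * x`. -/
structure IsRemainderPrior (m : ℕ) (α L W : ℝ) (v p : T → ℝ) : Prop where
  mem_stdSimplex : p ∈ stdSimplex ℝ T
  nonneg : 0 ≤ v
  mean_eq : m * wmean p v = α
  le_half : α ≤ 1 / 2
  one_le : 1 ≤ L
  negMulLog_mem (t : T) : negMulLog (v t) ∈ Set.Icc 0 (L * v t)
  moment_two_le : m * wmean p (fun t ↦ v t ^ 2) ≤ W

namespace IsRemainderPrior

lemma mass_nonneg (h : IsRemainderPrior m α L W v p) : 0 ≤ α := by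
  rw [← h.mean_eq]
  exact mul_nonneg m.cast_nonneg (wmean_nonneg h.mem_stdSimplex h.nonneg)

lemma randomMass (h : IsRemainderPrior m α L W v p) : RandomMass (remainderMass m α v) p where
  mem_stdSimplex := h.mem_stdSimplex
  nonneg i := by
    refine i.cases (fun _ ↦ ?_) fun _ ↦ h.nonneg
    simp only [remainderMass, Fin.cons_zero]
    linarith [h.le_half]
  half_le_sum θ := by
    simp only [massVector, remainderMass, Fin.sum_univ_succ, Fin.cons_zero, Fin.cons_succ]
    linarith [h.le_half, Finset.univ.sum_nonneg fun (i : Fin m) _ ↦ h.nonneg (θ i.succ)]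
  mean_eq_one := by
    rw [sum_remainderMass, wmean_const h.mem_stdSimplex, h.mean_eq, sub_add_cancel]

lemma massVariance_le (h : IsRemainderPrior m α L W v p) :
    massVariance (remainderMass m α v) p ≤ W := calc
  _ = m * wvar p v := by
    rw [massVariance, sum_remainderMass, wvar_const h.mem_stdSimplex, zero_add]
  _ ≤ m * wmean p fun t ↦ v t ^ 2 := by
    gcongr
    exact wvar_le_wmean_sq h.mem_stdSimplex v
  _ ≤ W := h.moment_two_le

lemma entropyVariance_le (h : IsRemainderPrior m α L W v p) :
    entropyVariance (remainderMass m α v) p ≤ L ^ 2 * W := calc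
  _ = m * wvar p fun t ↦ negMulLog (v t) := by
    rw [entropyVariance, sum_remainderMass m α v fun g ↦ wvar p fun t ↦ negMulLog (g t),
      wvar_const h.mem_stdSimplex, zero_add]
  _ ≤ m * wmean p fun t ↦ negMulLog (v t) ^ 2 := by
    gcongr
    exact wvar_le_wmean_sq h.mem_stdSimplex _
  _ ≤ m * wmean p fun t ↦ L ^ 2 * v t ^ 2 := by
    gcongr
    refine wmean_mono h.mem_stdSimplex fun t ↦ ?_
    rw [← mul_pow]
    exact pow_le_pow_left₀ (h.negMulLog_mem t).1 (h.negMulLog_mem t).2 2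
  _ = L ^ 2 * (m * wmean p fun t ↦ v t ^ 2) := by
    rw [wmean_const_mul, mul_left_comm]
  _ ≤ L ^ 2 * W := by
    gcongr
    exact h.moment_two_le

lemma meanEntropy_eq (h : IsRemainderPrior m α L W v p) :
    meanEntropy (remainderMass m α v) p =
      negMulLog (1 - α) + m * wmean p (fun t ↦ negMulLog (v t)) := by
  rw [meanEntropy, sum_remainderMass m α v fun g ↦ wmean p fun t ↦ negMulLog (g t),
    wmean_const h.mem_stdSimplex]

lemma sq_meanEntropy_le (h : IsRemainderPrior m α L W v p) :
    meanEntropy (remainderMass m α v) p ^ 2 ≤ L ^ 2 := by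
  have h_random : m * wmean p (fun t ↦ negMulLog (v t)) ≤ L * α := calc
    _ ≤ m * wmean p (fun t ↦ L * v t) := by
      gcongr
      exact wmean_mono h.mem_stdSimplex fun t ↦ (h.negMulLog_mem t).2
    _ = L * α := by rw [wmean_const_mul, mul_left_comm, h.mean_eq]
  have hα₀ := h.mass_nonneg
  have hα := h.le_half
  have h_nonneg : 0 ≤ negMulLog (1 - α) + m * wmean p fun t ↦ negMulLog (v t) :=
    add_nonneg (negMulLog_nonneg (by linarith) (by linarith))
      (mul_nonneg m.cast_nonneg (wmean_nonneg h.mem_stdSimplex fun t ↦ (h.negMulLog_mem t).1))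
  rw [h.meanEntropy_eq]
  refine pow_le_pow_left₀ h_nonneg ?_ 2
  nlinarith [negMulLog_le_one_sub_self (show 0 ≤ 1 - α by linarith), h.one_le]

lemma entropyVariance_add_le (h : IsRemainderPrior m α L W v p) :
    entropyVariance (remainderMass m α v) p +
      (meanEntropy (remainderMass m α v) p ^ 2 + 1) * massVariance (remainderMass m α v) p ≤
        3 * (L ^ 2 * W) := by
  have hL : 1 ≤ L ^ 2 := one_le_pow₀ h.one_le
  have h_nonneg : 0 ≤ massVariance (remainderMass m α v) p :=
    h.randomMass.wmean_sq_sum_sub_one ▸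
      wmean_nonneg (piWeight_mem_stdSimplex h.mem_stdSimplex) fun _ ↦ sq_nonneg _
  calc
    _ ≤ L ^ 2 * W + (L ^ 2 + L ^ 2) * W := by
      gcongr ?_ + ?_ * ?_
      exacts [h.entropyVariance_le, add_le_add h.sq_meanEntropy_le hL, h.massVariance_le]
    _ = 3 * (L ^ 2 * W) := by ring

theorem sq_le_Rstar (hp : IsRemainderPrior m α L W v p) (hq : IsRemainderPrior m α L W v q)
    (hn : 1 ≤ n) (hW : 2 * n * W ≤ 1 / 2)
    (hδ : ∀ t : ℕ, |wmean p (fun j ↦ poissonWeight (n * v j) t) -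
      wmean q (fun j ↦ poissonWeight (n * v j) t)| ≤ δ)
    (hδ_small : exp 1 * n * ((m + 1) * ((n + 1) * δ)) ≤ 1 / 4) (hΔ₀ : 0 ≤ Δ)
    (hΔ : Δ ≤ m * (wmean p (fun t ↦ negMulLog (v t)) - wmean q fun t ↦ negMulLog (v t)))
    (hΔ_large : 2304 * (L ^ 2 * W) ≤ Δ ^ 2) : Δ ^ 2 / 64 ≤ Rstar (m + 1) n := by
  have h_mass : 2 * n * massVariance (remainderMass m α v) p ≤ 1 / 2 := by
    refine le_trans ?_ hW
    gcongr
    exact hp.massVariance_le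
  have h_mixture (i : Fin (m + 1)) (t : ℕ) :
      |wmean p (fun j ↦ poissonWeight (n * remainderMass m α v i j) t) -
        wmean q (fun j ↦ poissonWeight (n * remainderMass m α v i j) t)| ≤ δ := by
    refine i.cases ?_ fun _ ↦ hδ t
    simp only [remainderMass, Fin.cons_zero]
    rw [wmean_const hp.mem_stdSimplex, wmean_const hq.mem_stdSimplex, sub_self, abs_zero]
    exact (abs_nonneg _).trans (hδ t)
  have h_fuzzy := hp.randomMass.sq_meanEntropy_sub_le hq.randomMass hn h_mass h_mixture
    (by exact_mod_cast hδ_small)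
  have h_gap : Δ ^ 2 ≤
      (meanEntropy (remainderMass m α v) p - meanEntropy (remainderMass m α v) q) ^ 2 := by
    rw [hp.meanEntropy_eq, hq.meanEntropy_eq, add_sub_add_left_eq_sub, ← mul_sub]
    exact pow_le_pow_left₀ hΔ₀ hΔ 2
  linarith [hp.entropyVariance_add_le, hq.entropyVariance_add_le]

end IsRemainderPrior

end RemainderMass

section PriorRegime

variable {T : Type*} {ε η α : ℝ} {m n R : ℕ} {p q τ : T → ℝ}

/-- The range of alphabet sizes `m + 1`, sample sizes `n`, moment orders `R` and random masses `α`
for which matched priors with parameters `ε` and `η` yield a lower bound on the minimax risk. Here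
`R` is of order `log (m + 1)`. -/
structure PriorRegime (ε η α : ℝ) (m n R : ℕ) : Prop where
  eps_pos : 0 < ε
  eps_le_one : ε ≤ 1
  eta_nonneg : 0 ≤ η
  sample_pos : 1 ≤ n
  sample_le : (n : ℝ) ≤ (m + 1) ^ 2
  alphabet_large : 48 ≤ (m : ℝ) + 1
  log_le : log (m + 1) ≤ R
  cube_le : (R : ℝ) ^ 3 ≤ m
  mul_cube_le : 184320 * (R : ℝ) ^ 3 ≤ η ^ 2 * m
  mass_le : α ≤ ε / 16
  one_le_mass_mul : 1 ≤ α * (m + 1) ^ 3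
  sample_mul_mass_le : n * α * R ≤ ε * exp (-8) / 4 * m

/-- The atoms `τ`, of mean `ε`, rescaled so that `m` of them carry mean mass `α`. -/
def scaledAtom (ε α : ℝ) (m : ℕ) (τ : T → ℝ) : T → ℝ := fun t ↦ α / (ε * m) * τ t

namespace PriorRegime

lemma m_pos (h : PriorRegime ε η α m n R) : 0 < (m : ℝ) := by
  linarith [h.alphabet_large]

lemma one_le_order (h : PriorRegime ε η α m n R) : 1 ≤ (R : ℝ) := by
  have h_pos : (0 : ℝ) < R := (Real.log_pos (by linarith [h.m_pos])).trans_le h.log_le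
  exact_mod_cast h_pos

lemma mass_pos (h : PriorRegime ε η α m n R) : 0 < α := by
  have hm := h.m_pos
  exact pos_of_mul_pos_left (zero_lt_one.trans_le h.one_le_mass_mul) (by positivity)

lemma scale_pos (h : PriorRegime ε η α m n R) : 0 < α / (ε * m) :=
  div_pos h.mass_pos (mul_pos h.eps_pos h.m_pos)

lemma exp_neg_mul_le (h : PriorRegime ε η α m n R) (l : ℕ) :
    exp (-(l * R)) ≤ 1 / ((m : ℝ) + 1) ^ l := by
  have hm : 0 < (m : ℝ) + 1 := by linarith [h.m_pos]
  rw [Real.exp_neg, Real.exp_nat_mul, ← one_div]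
  gcongr
  exact (Real.log_le_iff_le_exp hm).1 h.log_le

lemma atom_le (h : PriorRegime ε η α m n R) {x : ℝ} (hx : x ≤ ε + R ^ 2) : x ≤ 2 * (R : ℝ) ^ 2 := by
  linarith [h.eps_le_one, one_le_pow₀ h.one_le_order (n := 2)]

lemma scaledAtom_mem_Icc (h : PriorRegime ε η α m n R) (hτ : ∀ t, τ t ∈ Set.Icc 0 (ε + R ^ 2))
    (t : T) : scaledAtom ε α m τ t ∈ Set.Icc 0 1 := by
  have hε := h.eps_pos
  have hm := h.m_pos
  refine ⟨mul_nonneg h.scale_pos.le (hτ t).1, ?_⟩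
  calc
    α / (ε * m) * τ t ≤ α / (ε * m) * (2 * R ^ 2) :=
      mul_le_mul_of_nonneg_left (h.atom_le (hτ t).2) h.scale_pos.le
    _ ≤ ε / 16 / (ε * m) * (2 * R ^ 2) := by
      gcongr
      exact h.mass_le
    _ = R ^ 2 / m / 8 := by
      field_simp
      ring
    _ ≤ 1 / 8 := by
      gcongr
      rw [div_le_one hm]
      exact (pow_le_pow_right₀ h.one_le_order (by norm_num)).trans h.cube_le
    _ ≤ 1 := by norm_num

lemma negMulLog_scaledAtom_mem_Icc (h : PriorRegime ε η α m n R)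
    (hτ : ∀ t, τ t ∈ Set.Icc 0 (ε + R ^ 2)) (hτ_atom : ∀ t, τ t = 0 ∨ ε ≤ τ t) (t : T) :
    negMulLog (scaledAtom ε α m τ t) ∈ Set.Icc 0 (4 * R * scaledAtom ε α m τ t) := by
  obtain ⟨h_nonneg, h_le_one⟩ := h.scaledAtom_mem_Icc hτ t
  refine ⟨negMulLog_nonneg h_nonneg h_le_one, ?_⟩
  obtain h_zero | h_atom := hτ_atom t
  · simp [scaledAtom, h_zero]
  have hε := h.eps_pos
  have hm := h.m_pos
  have h_lower : exp (-(4 * R)) ≤ scaledAtom ε α m τ t := calc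
    exp (-(4 * R)) ≤ 1 / ((m : ℝ) + 1) ^ 4 := mod_cast h.exp_neg_mul_le 4
    _ ≤ α * (m + 1) ^ 3 / (m + 1) ^ 4 := by
      gcongr
      exact h.one_le_mass_mul
    _ = α / (m + 1) := by field_simp
    _ ≤ α / m := by
      have hα := h.mass_pos
      gcongr
      linarith
    _ = α / (ε * m) * ε := by field_simp
    _ ≤ scaledAtom ε α m τ t := mul_le_mul_of_nonneg_left h_atom h.scale_pos.le
  have h_log : -(4 * R) ≤ log (scaledAtom ε α m τ t) :=
    (Real.le_log_iff_exp_le ((Real.exp_pos _).trans_le h_lower)).2 h_lower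
  rw [negMulLog]
  nlinarith

lemma rate_mem_Icc (h : PriorRegime ε η α m n R) (hτ : ∀ t, τ t ∈ Set.Icc 0 (ε + R ^ 2)) (t : T) :
    n * scaledAtom ε α m τ t ∈ Set.Icc 0 (exp (-8) / 2 * R) := by
  have hε := h.eps_pos
  have hm := h.m_pos
  refine ⟨mul_nonneg n.cast_nonneg (h.scaledAtom_mem_Icc hτ t).1, ?_⟩
  calc
    n * (α / (ε * m) * τ t) ≤ n * (α / (ε * m) * (2 * R ^ 2)) :=
      mul_le_mul_of_nonneg_left (mul_le_mul_of_nonneg_left (h.atom_le (hτ t).2) h.scale_pos.le)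
        n.cast_nonneg
    _ = n * α * R * (2 * R / (ε * m)) := by ring
    _ ≤ ε * exp (-8) / 4 * m * (2 * R / (ε * m)) := by
      gcongr ?_ * _
      exact h.sample_mul_mass_le
    _ = exp (-8) / 2 * R := by
      field_simp
      norm_num

lemma totalVariation_le (h : PriorRegime ε η α m n R) :
    exp 1 * n * ((m + 1) * ((n + 1) * (2 / (m + 1) ^ 6))) ≤ 1 / 4 := by
  have hk : 48 ≤ (m : ℝ) + 1 := h.alphabet_large
  have hn : (n : ℝ) ≤ (m + 1) ^ 2 := h.sample_le
  generalize (m : ℝ) + 1 = k at *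
  have hk_pos : 0 < k := by linarith
  have hk_sq : 1 ≤ k ^ 2 := one_le_pow₀ (by linarith)
  have he : exp 1 ≤ 3 := by linarith [Real.exp_one_lt_d9]
  calc
    _ ≤ 3 * k ^ 2 * (k * ((k ^ 2 + k ^ 2) * (2 / k ^ 6))) := by gcongr
    _ = 12 / k := by
      field_simp
      norm_num
    _ ≤ 1 / 4 := by
      rw [div_le_iff₀ hk_pos]
      linarith

lemma mul_massVariance_le (h : PriorRegime ε η α m n R) :
    2 * n * (5 * α ^ 2 * R / (ε ^ 2 * m)) ≤ 1 / 2 := by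
  have hε := h.eps_pos
  have hm := h.m_pos
  have hα := h.mass_pos
  calc
    _ = 10 * (n * α * R) * α / (ε ^ 2 * m) := by ring
    _ ≤ 10 * (ε * exp (-8) / 4 * m) * (ε / 16) / (ε ^ 2 * m) := by
      gcongr ?_ / _
      exact mul_le_mul (mul_le_mul_of_nonneg_left h.sample_mul_mass_le (by norm_num)) h.mass_le
        hα.le (by positivity)
    _ = 10 / 64 * exp (-8) := by
      field_simp
      norm_num
    _ ≤ 1 / 2 := by linarith [Real.exp_le_one_iff.2 (show (-8 : ℝ) ≤ 0 by norm_num)]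

lemma mul_variance_le (h : PriorRegime ε η α m n R) :
    2304 * ((4 * R) ^ 2 * (5 * α ^ 2 * R / (ε ^ 2 * m))) ≤ (η / ε * α) ^ 2 := by
  have hε := h.eps_pos
  have hm := h.m_pos
  calc
    _ = 184320 * R ^ 3 * (α ^ 2 / (ε ^ 2 * m)) := by ring
    _ ≤ η ^ 2 * m * (α ^ 2 / (ε ^ 2 * m)) := by
      gcongr ?_ * _
      exact h.mul_cube_le
    _ = (η / ε * α) ^ 2 := by field_simp

variable [Fintype T]

lemma isRemainderPrior (h : PriorRegime ε η α m n R) (hτ : ∀ t, τ t ∈ Set.Icc 0 (ε + R ^ 2))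
    (hτ_atom : ∀ t, τ t = 0 ∨ ε ≤ τ t) (hp : p ∈ stdSimplex ℝ T) (h_mean : wmean p τ = ε)
    (h_sq : wmean p (fun t ↦ τ t ^ 2) ≤ 5 * R) :
    IsRemainderPrior m α (4 * R) (5 * α ^ 2 * R / (ε ^ 2 * m)) (scaledAtom ε α m τ) p where
  mem_stdSimplex := hp
  nonneg t := (h.scaledAtom_mem_Icc hτ t).1
  mean_eq := by
    have hε := h.eps_pos
    have hm := h.m_pos
    unfold scaledAtom
    rw [wmean_const_mul, h_mean]
    field_simp
  le_half := by linarith [h.mass_le, h.eps_le_one]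
  one_le := by linarith [h.one_le_order]
  negMulLog_mem := h.negMulLog_scaledAtom_mem_Icc hτ hτ_atom
  moment_two_le := by
    have hm := h.m_pos
    simp only [scaledAtom, mul_pow]
    calc
      _ = m * (α / (ε * m)) ^ 2 * wmean p (fun t ↦ τ t ^ 2) := by rw [wmean_const_mul, mul_assoc]
      _ ≤ m * (α / (ε * m)) ^ 2 * (5 * R) := by gcongr
      _ = 5 * α ^ 2 * R / (ε ^ 2 * m) := by field_simp

lemma abs_wmean_poissonWeight_scaledAtom_sub_le (h : PriorRegime ε η α m n R)
    (hτ : ∀ t, τ t ∈ Set.Icc 0 (ε + R ^ 2)) (hp : p ∈ stdSimplex ℝ T) (hq : q ∈ stdSimplex ℝ T)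
    (h_moment : ∀ l ≤ R, wmean p (fun t ↦ τ t ^ l) = wmean q fun t ↦ τ t ^ l) (t : ℕ) :
    |wmean p (fun j ↦ poissonWeight (n * scaledAtom ε α m τ j) t) -
      wmean q (fun j ↦ poissonWeight (n * scaledAtom ε α m τ j) t)| ≤ 2 / (m + 1) ^ 6 := by
  have hR : 0 < (R : ℝ) := zero_lt_one.trans_le h.one_le_order
  have h_exp : 2 * exp 1 * (exp (-8) / 2 * R) = exp (-7) * R := by
    rw [show (-7 : ℝ) = 1 + -8 by norm_num, Real.exp_add]
    ring
  have h_close := abs_wmean_poissonWeight_sub_le (r := R) hp hq (h.rate_mem_Icc hτ)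
    (Nat.cast_pos.1 hR)
    (h_exp.trans_le (mul_le_of_le_one_left hR.le (Real.exp_le_one_iff.2 (by norm_num))))
    (fun l hl ↦ by
      simp_rw [scaledAtom, ← mul_assoc, mul_pow, wmean_const_mul]
      rw [h_moment l hl]) t
  calc
    _ ≤ 2 * exp (exp (-8) / 2 * R) * exp (-7) ^ R := by
      rwa [h_exp, mul_div_assoc, div_self hR.ne', mul_one] at h_close
    _ ≤ 2 * exp R * exp (-7) ^ R := by
      gcongr
      refine mul_le_of_le_one_left hR.le ?_
      linarith [Real.exp_le_one_iff.2 (show (-8 : ℝ) ≤ 0 by norm_num)]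
    _ = 2 * exp (-(6 * R)) := by
      rw [← Real.exp_nat_mul, mul_assoc, ← Real.exp_add]
      ring_nf
    _ ≤ 2 * (1 / (m + 1) ^ 6) := by
      gcongr
      exact_mod_cast h.exp_neg_mul_le 6
    _ = 2 / (m + 1) ^ 6 := mul_one_div _ _

end PriorRegime

namespace MatchedPriors

variable [Fintype T]

lemma atom_mem_Icc (h : MatchedPriors ε η R p q τ) (hε : 0 ≤ ε) (t : T) :
    τ t ∈ Set.Icc 0 (ε + R ^ 2) :=
  ⟨(h.atom_eq_zero_or_le t).elim Eq.ge hε.trans, h.atom_le t⟩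

lemma right_mean_eq (h : MatchedPriors ε η R p q τ) : wmean q τ = ε := by
  simpa [h.mean_eq] using (h.moment_eq 1 (by simp)).symm

lemma right_moment_two_le (h : MatchedPriors ε η R p q τ) (hR : 1 ≤ R) :
    wmean q (fun t ↦ τ t ^ 2) ≤ 5 * R :=
  (h.moment_eq 2 (by lia)).symm.trans_le h.moment_two_le

lemma gap_scaledAtom (h : MatchedPriors ε η R p q τ) (hε : 0 < ε) (hα : 0 ≤ α) (hm : 0 < m) :
    η / ε * α ≤ m * (wmean p (fun t ↦ negMulLog (scaledAtom ε α m τ t)) -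
      wmean q fun t ↦ negMulLog (scaledAtom ε α m τ t)) := by
  have h_scale (b : ℝ) (p : T → ℝ) : wmean p (fun t ↦ negMulLog (b * τ t)) =
      negMulLog b * wmean p τ + b * wmean p fun t ↦ negMulLog (τ t) := by
    simp_rw [negMulLog_mul, mul_comm (τ _), wmean_add, wmean_const_mul]
  unfold scaledAtom
  rw [h_scale, h_scale, h.mean_eq, h.right_mean_eq, add_sub_add_left_eq_sub, ← mul_sub]
  calc
    η / ε * α = m * (α / (ε * m) * η) := by field_simp
    _ ≤ _ := by
      gcongr
      exact h.gap

theorem sq_le_Rstar (h : MatchedPriors ε η R p q τ) (h_regime : PriorRegime ε η α m n R) :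
    (η / ε * α) ^ 2 / 64 ≤ Rstar (m + 1) n := by
  have hε := h_regime.eps_pos
  have hα := h_regime.mass_pos
  have hη := h_regime.eta_nonneg
  have hτ := h.atom_mem_Icc hε.le
  have h_left := h_regime.isRemainderPrior hτ h.atom_eq_zero_or_le h.left_mem h.mean_eq
    h.moment_two_le
  have h_right := h_regime.isRemainderPrior hτ h.atom_eq_zero_or_le h.right_mem h.right_mean_eq
    (h.right_moment_two_le (Nat.one_le_cast.1 h_regime.one_le_order))
  exact h_left.sq_le_Rstar h_right h_regime.sample_pos h_regime.mul_massVariance_le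
    (h_regime.abs_wmean_poissonWeight_scaledAtom_sub_le hτ h.left_mem h.right_mem
      fun l hl ↦ h.moment_eq l (hl.trans R.le_succ))
    h_regime.totalVariation_le (by positivity)
    (h.gap_scaledAtom hε hα.le (Nat.cast_pos.1 h_regime.m_pos)) h_regime.mul_variance_le

end MatchedPriors

end PriorRegime

section BiasRate

open Filter

variable {k n : ℕ}

/-- The order of magnitude `min 1 (k / (n log k))` of the minimax error. -/
def biasRate (k n : ℕ) : ℝ := min 1 (k / (n * log k))

lemma half_le_log (hk : 2 ≤ k) : 1 / 2 ≤ log k := by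
  have hk' : (2 : ℝ) ≤ k := Nat.ofNat_le_cast.2 hk
  linarith [Real.log_two_gt_d9, Real.log_le_log two_pos hk']

lemma biasRate_nonneg (k n : ℕ) : 0 ≤ biasRate k n :=
  le_min zero_le_one (by positivity)

lemma biasRate_le_one (k n : ℕ) : biasRate k n ≤ 1 :=
  min_le_left _ _

lemma biasRate_le (hk : 2 ≤ k) (hn : 1 ≤ n) : biasRate k n ≤ 2 * k / n := by
  have h_log := half_le_log hk
  have hn' : (0 : ℝ) < n := Nat.cast_pos.2 hn
  refine (min_le_right _ _).trans ?_
  rw [div_le_div_iff₀ (mul_pos hn' (by linarith)) hn']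
  calc
    (k : ℝ) * n = 2 * k * (n * (1 / 2)) := by ring
    _ ≤ 2 * k * (n * log k) := by gcongr

lemma mul_biasRate_mul_log_le (hk : 2 ≤ k) (hn : 1 ≤ n) : n * biasRate k n * log k ≤ k := by
  have h_log_pos : 0 < log k := by linarith [half_le_log hk]
  calc
    n * biasRate k n * log k ≤ n * (k / (n * log k)) * log k := by
      gcongr
      exact min_le_right _ _
    _ = k := by field_simp

lemma inv_sq_le_biasRate (hk : 2 ≤ k) (hn : 1 ≤ n) (hnk : (n : ℝ) ≤ k ^ 2) :
    1 / (k : ℝ) ^ 2 ≤ biasRate k n := by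
  have hk' : (2 : ℝ) ≤ k := Nat.ofNat_le_cast.2 hk
  have h_log_pos : 0 < log k := by linarith [half_le_log hk]
  have h_log_le : log k ≤ k := Real.log_le_self k.cast_nonneg
  refine le_min ((div_le_one (by positivity)).2 (one_le_pow₀ (by linarith))) ?_
  calc
    1 / (k : ℝ) ^ 2 = k / (k ^ 2 * k) := by field_simp
    _ ≤ k / (n * log k) := by gcongr

lemma biasRate_of_le (hk : 2 ≤ k) (hn : 1 ≤ n) (h : k / log k ≤ n) :
    biasRate k n = k / (n * log k) := by
  have h_log_pos : 0 < log k := by linarith [half_le_log hk]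
  rw [div_le_iff₀ h_log_pos] at h
  exact min_eq_right ((div_le_one (by positivity)).2 h)

lemma biasRate_of_ge (hk : 2 ≤ k) (hn : 1 ≤ n) (h : n ≤ k / log k) : biasRate k n = 1 := by
  have h_log_pos : 0 < log k := by linarith [half_le_log hk]
  rw [le_div_iff₀ h_log_pos] at h
  exact min_eq_left ((one_le_div (by positivity)).2 h)

lemma eventually_ceil_log_pow_three_le {κ : ℝ} (hκ : 0 < κ) :
    ∀ᶠ m : ℕ in atTop, (⌈log (m + 1)⌉₊ : ℝ) ≤ 2 * log (m + 1) ∧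
      (⌈log (m + 1)⌉₊ : ℝ) ^ 3 ≤ κ * m := by
  have h_atTop : Tendsto (fun m : ℕ ↦ (m : ℝ) + 1) atTop atTop :=
    tendsto_atTop_add_const_right _ _ tendsto_natCast_atTop_atTop
  have h_isLittleO := (Real.isLittleO_pow_log_id_atTop (n := 3)).def (show 0 < κ / 16 by positivity)
  filter_upwards [h_atTop.eventually h_isLittleO, eventually_ge_atTop 1,
    h_atTop.eventually (Real.tendsto_log_atTop.eventually_ge_atTop 1)] with m h_pow hm h_log
  have hm' : (1 : ℝ) ≤ m := Nat.one_le_cast.2 hm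
  have h_ceil : (⌈log ((m : ℝ) + 1)⌉₊ : ℝ) ≤ 2 * log (m + 1) := by
    linarith [Nat.ceil_lt_add_one (zero_le_one.trans h_log)]
  rw [Real.norm_of_nonneg (by positivity), id, Real.norm_of_nonneg (by positivity)] at h_pow
  refine ⟨h_ceil, ?_⟩
  calc
    (⌈log ((m : ℝ) + 1)⌉₊ : ℝ) ^ 3 ≤ (2 * log (m + 1)) ^ 3 := by gcongr
    _ = 8 * log (m + 1) ^ 3 := by ring
    _ ≤ 8 * (κ / 16 * (m + m)) := by
      gcongr
      exact h_pow.trans (by gcongr)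
    _ = κ * m := by ring

lemma eventually_priorRegime {ε η : ℝ} (hε : 0 < ε) (hε1 : ε ≤ 1) (hη : 0 < η) :
    ∀ᶠ m : ℕ in atTop, ∀ n : ℕ, 1 ≤ n → (n : ℝ) ≤ (m + 1) ^ 2 →
      PriorRegime ε η (ε * exp (-8) / 16 * biasRate (m + 1) n) m n ⌈log (m + 1)⌉₊ := by
  filter_upwards [eventually_ceil_log_pow_three_le one_pos,
    eventually_ceil_log_pow_three_le (show 0 < η ^ 2 / 184320 by positivity),
    eventually_ge_atTop 48,
    tendsto_natCast_atTop_atTop.eventually_ge_atTop (16 / (ε * exp (-8)))]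
    with m ⟨h_ceil, h_cube⟩ ⟨_, h_cube'⟩ hm hm' n hn hnm
  have hk : 2 ≤ m + 1 := by lia
  have hm_cast : (48 : ℝ) ≤ m := Nat.ofNat_le_cast.2 hm
  have h_rate_nonneg := biasRate_nonneg (m + 1) n
  have h_inv_sq := inv_sq_le_biasRate hk hn (by exact_mod_cast hnm)
  have h_log := mul_biasRate_mul_log_le hk hn
  push_cast at h_inv_sq h_log
  rw [div_le_iff₀' (by positivity)] at hm'
  exact
  { eps_pos := hε
    eps_le_one := hε1
    eta_nonneg := hη.le
    sample_pos := hn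
    sample_le := hnm
    alphabet_large := by linarith
    log_le := Nat.le_ceil _
    cube_le := by rwa [one_mul] at h_cube
    mul_cube_le := by linarith
    mass_le := calc
      _ ≤ ε * 1 / 16 * 1 := by
        gcongr
        exacts [Real.exp_le_one_iff.2 (by norm_num), biasRate_le_one _ _]
      _ = ε / 16 := by ring
    one_le_mass_mul := calc
      1 ≤ ε * exp (-8) / 16 * (m + 1) := by linarith [mul_pos hε (Real.exp_pos (-8))]
      _ = ε * exp (-8) / 16 * (1 / ((m : ℝ) + 1) ^ 2) * (m + 1) ^ 3 := by field_simp
      _ ≤ _ := by gcongr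
    sample_mul_mass_le := calc
      _ ≤ n * (ε * exp (-8) / 16 * biasRate (m + 1) n) * (2 * log (m + 1)) := by gcongr
      _ = ε * exp (-8) / 8 * (n * biasRate (m + 1) n * log (m + 1)) := by ring
      _ ≤ ε * exp (-8) / 8 * (m + m) := by
        gcongr
        linarith
      _ = ε * exp (-8) / 4 * m := by ring }

lemma exists_mul_sq_biasRate_le_Rstar_of_large : ∃ c > 0, ∃ K : ℕ, ∀ k n : ℕ, K ≤ k → 1 ≤ n →
    (n : ℝ) ≤ k ^ 2 → c * biasRate k n ^ 2 ≤ Rstar k n := by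
  obtain ⟨ε, η, hε, hε1, hη, h_priors⟩ := exists_matchedPriors
  obtain ⟨M, h_regime⟩ := eventually_atTop.1 (eventually_priorRegime hε hε1 hη)
  refine ⟨(η * exp (-8) / 16) ^ 2 / 64, by positivity, M + 1, fun k n hk hn hnk ↦ ?_⟩
  obtain ⟨m, rfl⟩ := Nat.exists_eq_add_of_le' (le_of_add_le_right hk)
  have h_params := h_regime m (Nat.le_of_succ_le_succ hk) n hn (by exact_mod_cast hnk)
  have : NeZero ⌈log ((m : ℝ) + 1)⌉₊ :=
    ⟨Nat.one_le_iff_ne_zero.1 (Nat.one_le_cast.1 h_params.one_le_order)⟩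
  obtain ⟨p, q, τ, h_matched⟩ := h_priors ⌈log ((m : ℝ) + 1)⌉₊
  refine Eq.trans_le ?_ (h_matched.sq_le_Rstar h_params)
  field_simp

lemma sq_biasRate_le {K : ℕ} (hk : 2 ≤ k) (hn : 1 ≤ n) (h : k < K ∨ (k : ℝ) ^ 2 < n) :
    biasRate k n ^ 2 ≤ (2 * K + 4) / n := by
  have hn' : (0 : ℝ) < n := Nat.cast_pos.2 hn
  obtain h_small | h_many := h
  · calc
      biasRate k n ^ 2 ≤ biasRate k n :=
        pow_le_of_le_one (biasRate_nonneg k n) (biasRate_le_one k n) two_ne_zero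
      _ ≤ 2 * k / n := biasRate_le hk hn
      _ ≤ (2 * K + 4) / n := by
        gcongr
        linarith [Nat.cast_le (α := ℝ).2 h_small.le]
  · calc
      biasRate k n ^ 2 ≤ (2 * k / n) ^ 2 :=
        pow_le_pow_left₀ (biasRate_nonneg k n) (biasRate_le hk hn) 2
      _ = 4 * k ^ 2 / n / n := by ring
      _ ≤ (2 * K + 4) / n := by
        gcongr
        rw [div_le_iff₀ hn']
        nlinarith [K.cast_nonneg (α := ℝ)]

theorem exists_mul_sq_biasRate_le_Rstar : ∃ c > 0, ∀ k n : ℕ, 2 ≤ k → 1 ≤ n →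
    c * biasRate k n ^ 2 ≤ Rstar k n := by
  obtain ⟨c, hc, K, h_large⟩ := exists_mul_sq_biasRate_le_Rstar_of_large
  refine ⟨min c (1 / (6400 * (2 * K + 4))), by positivity, fun k n hk hn ↦ ?_⟩
  by_cases h : K ≤ k ∧ (n : ℝ) ≤ k ^ 2
  · exact (mul_le_mul_of_nonneg_right (min_le_left _ _) (sq_nonneg _)).trans
      (h_large k n h.1 hn h.2)
  · rw [not_and_or, not_le, not_le] at h
    calc
      _ ≤ 1 / (6400 * (2 * K + 4)) * ((2 * K + 4) / n : ℝ) :=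
        mul_le_mul (min_le_right _ _) (sq_biasRate_le hk hn h) (sq_nonneg _) (by positivity)
      _ = 1 / (6400 * (n : ℝ)) := by field_simp
      _ ≤ Rstar k n := inv_le_Rstar hk hn

end BiasRate

/-- minimax lower bound `R*(k,n) ≳ (k/(n log k))² ∨ 1`. -/
theorem minimax_lower_bias :
    ∃ c c' : ℝ, 0 < c ∧ 0 < c' ∧
      ∀ k n : ℕ, 2 ≤ k → 1 ≤ n →
        ((k : ℝ) / Real.log k ≤ (n : ℝ) →
          c * ((k : ℝ) / (n * Real.log k)) ^ 2 ≤ Rstar k n) ∧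
        ((n : ℝ) ≤ (k : ℝ) / Real.log k → c' ≤ Rstar k n) := by
  obtain ⟨c, hc, h_bound⟩ := exists_mul_sq_biasRate_le_Rstar
  refine ⟨c, c, hc, hc, fun k n hk hn ↦ ⟨fun h ↦ ?_, fun h ↦ ?_⟩⟩
  · rw [← biasRate_of_le hk hn h]
    exact h_bound k n hk hn
  · simpa [biasRate_of_ge hk hn h] using h_bound k n hk hn
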